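/- Let A be a nonempty set of graphons that is compact with respect to the pseudometric δ_□, and for n ≥ 1 and δ > 0 let N_□(n,δ;A) be the number of simple graphs G on {1,…,n} with inf_{W∈A} δ_□(W_G, W) ≤ δ. Then there exists W* ∈ A with Ent(W*) = sup_{W∈A} Ent(W), and lim_{δ→0⁺} liminf_{n→∞} (log₂ N_□(n,δ;A))/C(n,2) = lim_{δ→0⁺} limsup_{n→∞} (log₂ N_□(n,δ;A))/C(n,2) = sup_{W∈A} Ent(W), where C(n,2) = n(n-1)/2. -/

import Mathlib

open MeasureTheory Set Filter

noncomputable section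

/-- A graphon: a symmetric measurable function `ℝ → ℝ → ℝ` with values in `[0,1]`
(only its values on `[0,1]²` matter). -/
def IsGraphon (W : ℝ → ℝ → ℝ) : Prop :=
  (∀ x y, W x y = W y x) ∧ Measurable (Function.uncurry W) ∧
    ∀ x y, W x y ∈ Set.Icc (0 : ℝ) 1

/-- The cut norm `‖U‖_□`, the supremum over measurable `S, T ⊆ [0,1]` of
`|∫_{S×T} U|`. -/
def cutNorm (U : ℝ → ℝ → ℝ) : ℝ :=
  sSup { r : ℝ | ∃ S T : Set ℝ, MeasurableSet S ∧ MeasurableSet T ∧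
    S ⊆ Set.Icc 0 1 ∧ T ⊆ Set.Icc 0 1 ∧
    r = |∫ p in S ×ˢ T, U p.1 p.2| }

/-- `d_□(W₁, W₂) = ‖W₁ - W₂‖_□`. -/
def dCut (W₁ W₂ : ℝ → ℝ → ℝ) : ℝ := cutNorm (fun x y => W₁ x y - W₂ x y)

/-- A Lebesgue-measure-preserving map `[0,1] → [0,1]`. -/
def IsMPSelf (σ : ℝ → ℝ) : Prop :=
  MeasureTheory.MeasurePreserving σ
      (MeasureTheory.volume.restrict (Set.Icc (0:ℝ) 1))
      (MeasureTheory.volume.restrict (Set.Icc (0:ℝ) 1)) ∧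
    Set.MapsTo σ (Set.Icc (0:ℝ) 1) (Set.Icc (0:ℝ) 1)

/-- The cut distance `δ_□(W₁, W₂)`. -/
def deltaCut (W₁ W₂ : ℝ → ℝ → ℝ) : ℝ :=
  sInf { r : ℝ | ∃ σ₁ σ₂ : ℝ → ℝ, IsMPSelf σ₁ ∧ IsMPSelf σ₂ ∧
    r = cutNorm (fun x y => W₁ (σ₁ x) (σ₁ y) - W₂ (σ₂ x) (σ₂ y)) }

/-- The binary entropy function `h` (base-2 logarithm; `logb 2 0 = 0` by convention,
so `h 0 = h 1 = 0`). -/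
def binEnt (x : ℝ) : ℝ := -x * Real.logb 2 x - (1 - x) * Real.logb 2 (1 - x)

/-- `h̃ x = h (min x (1/2))`. -/
def htilde (x : ℝ) : ℝ := binEnt (min x (1/2))

/-- The entropy `Ent(W) = ∫₀¹∫₀¹ h(W(x,y)) dx dy` of a graphon. -/
def graphonEnt (W : ℝ → ℝ → ℝ) : ℝ :=
  ∫ x in Set.Icc (0:ℝ) 1, ∫ y in Set.Icc (0:ℝ) 1, binEnt (W x y)

open Classical in
/-- The graphon `W_G` of a simple graph `G` on `{1, …, n}` (vertices as `Fin n`,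
vertex `i : Fin n` representing `i+1`): `W_G x y = 1` iff `⌈nx⌉⌈ny⌉ ∈ E(G)`. -/
def graphonOfGraph {n : ℕ} (G : SimpleGraph (Fin n)) : ℝ → ℝ → ℝ := fun x y =>
  if ∃ i j : Fin n, G.Adj i j ∧ ⌈(n : ℝ) * x⌉ = ((i : ℕ) : ℤ) + 1 ∧
      ⌈(n : ℝ) * y⌉ = ((j : ℕ) : ℤ) + 1
  then 1 else 0

/-- A labelled graph class: a set of graphs on `{1,…,n}` for each `n`. -/
abbrev GraphClass := ∀ n : ℕ, Set (SimpleGraph (Fin n))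

/-- A graph class is closed under relabelling by permutations. -/
def IsGraphClass (Q : GraphClass) : Prop :=
  ∀ (n : ℕ) (π : Equiv.Perm (Fin n)) (G : SimpleGraph (Fin n)),
    G ∈ Q n → G.comap ⇑π ∈ Q n

/-- A hereditary graph class: a graph class closed under taking induced subgraphs
(relabelled by the order-preserving bijection). -/
def IsHereditary (Q : GraphClass) : Prop :=
  IsGraphClass Q ∧
    ∀ (m n : ℕ) (f : Fin m → Fin n), StrictMono f →
      ∀ G ∈ Q n, G.comap f ∈ Q m

/-- `Q̂`: the set of graphons which are limits (in cut distance) of sequences of graphs in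
the class `Q` whose orders tend to infinity. -/
def limitSet (Q : GraphClass) : Set (ℝ → ℝ → ℝ) :=
  { W | IsGraphon W ∧
    ∃ (nk : ℕ → ℕ) (Gk : ∀ k, SimpleGraph (Fin (nk k))),
      (∀ k, Gk k ∈ Q (nk k)) ∧ Filter.Tendsto nk Filter.atTop Filter.atTop ∧
      Filter.Tendsto (fun k => deltaCut (graphonOfGraph (Gk k)) W) Filter.atTop (nhds 0) }

/-- `C(n,2) = n(n-1)/2` as a real number. -/
def choose2 (n : ℕ) : ℝ := (n : ℝ) * ((n : ℝ) - 1) / 2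

open Classical in
/-- The step function `E[W | P]` obtained by averaging `W` over the products of the
parts of the partition `P` of `[0,1]`. -/
def condExpPart {k : ℕ} (P : Fin k → Set ℝ) (W : ℝ → ℝ → ℝ) : ℝ → ℝ → ℝ := fun x y =>
  ∑ i : Fin k, ∑ j : Fin k,
    if x ∈ P i ∧ y ∈ P j then ⨍ p in (P i) ×ˢ (P j), W p.1 p.2 else 0

/-- `W̄_n`: the step function of `W` for the partition of `[0,1]` into `n` consecutive
intervals of length `1/n`. -/
def barStep (n : ℕ) (W : ℝ → ℝ → ℝ) : ℝ → ℝ → ℝ :=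
  condExpPart (fun i : Fin n => Set.Ioc (((i : ℕ) : ℝ)/n) ((((i : ℕ) : ℝ) + 1)/n)) W

/-- `N̂_□(n, δ; W)`: the number of graphs `G` on `{1,…,n}` with `d_□(W_G, W) ≤ δ`. -/
def NhatCut (n : ℕ) (δ : ℝ) (W : ℝ → ℝ → ℝ) : ℕ :=
  Nat.card {G : SimpleGraph (Fin n) // dCut (graphonOfGraph G) W ≤ δ}

/-- `N_□(n, δ; W)`: the number of graphs `G` on `{1,…,n}` with `δ_□(W_G, W) ≤ δ`. -/
def NCut (n : ℕ) (δ : ℝ) (W : ℝ → ℝ → ℝ) : ℕ :=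
  Nat.card {G : SimpleGraph (Fin n) // deltaCut (graphonOfGraph G) W ≤ δ}

open Classical in
/-- The induced density `p(F; W)` of a graph `F` on `{1,…,k}` in a graphon `W`. -/
def inducedDensity {k : ℕ} (F : SimpleGraph (Fin k)) (W : ℝ → ℝ → ℝ) : ℝ :=
  ∫ x : Fin k → ℝ in Set.univ.pi (fun _ : Fin k => Set.Icc (0:ℝ) 1),
    ∏ i : Fin k, ∏ j : Fin k,
      if i < j then (if F.Adj i j then W (x i) (x j) else 1 - W (x i) (x j)) else 1

open Classical in
/-- The randomness support graphon `1_{rand(W)}` of `W`. -/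
def randIndicator (W : ℝ → ℝ → ℝ) : ℝ → ℝ → ℝ := fun x y =>
  if 0 < W x y ∧ W x y < 1 then 1 else 0

/-- A kernel `U` is `K_r`-free if `∏_{i<j} U(x_i, x_j) = 0` for a.e. `x ∈ [0,1]^r`. -/
def KFree (r : ℕ) (U : ℝ → ℝ → ℝ) : Prop :=
  ∀ᵐ x ∂(MeasureTheory.volume.restrict (Set.univ.pi fun _ : Fin r => Set.Icc (0:ℝ) 1)),
    (∏ i : Fin r, ∏ j : Fin r, if i < j then U (x i) (x j) else 1) = 0

open Classical in
/-- The graphon `W^{(r,s)}`: equal to `1/2` off the diagonal blocks, `1` on the first `s`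
diagonal blocks `I_i × I_i`, and `0` on the remaining diagonal blocks. -/
def Wrs (r s : ℕ) : ℝ → ℝ → ℝ := fun x y =>
  if ∃ i j : Fin r, i ≠ j ∧ x ∈ Set.Ioc (((i:ℕ):ℝ)/r) ((((i:ℕ):ℝ)+1)/r) ∧
      y ∈ Set.Ioc (((j:ℕ):ℝ)/r) ((((j:ℕ):ℝ)+1)/r)
  then 1/2
  else if ∃ i : Fin r, (i:ℕ) < s ∧ x ∈ Set.Ioc (((i:ℕ):ℝ)/r) ((((i:ℕ):ℝ)+1)/r) ∧
      y ∈ Set.Ioc (((i:ℕ):ℝ)/r) ((((i:ℕ):ℝ)+1)/r)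
  then 1 else 0

/-- `E_r = ⋃_{i ≠ j} I_i × I_j` where `I_i`, `i = 1, …, r`, are the consecutive
intervals of length `1/r` in `[0,1]`. -/
def Er (r : ℕ) : Set (ℝ × ℝ) :=
  ⋃ (i : Fin r) (j : Fin r) (_ : i ≠ j),
    (Set.Ioc (((i:ℕ):ℝ)/r) ((((i:ℕ):ℝ)+1)/r)) ×ˢ (Set.Ioc (((j:ℕ):ℝ)/r) ((((j:ℕ):ℝ)+1)/r))

/-- `R_r`: the set of graphons equal to `1/2` on `E_r` and `{0,1}`-valued elsewhere
on `[0,1]²`. -/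
def Rset (r : ℕ) : Set (ℝ → ℝ → ℝ) :=
  { W | IsGraphon W ∧ (∀ p ∈ Er r, W p.1 p.2 = 1/2) ∧
      ∀ p ∈ ((Set.Icc (0:ℝ) 1) ×ˢ (Set.Icc (0:ℝ) 1)) \ Er r,
        W p.1 p.2 = 0 ∨ W p.1 p.2 = 1 }

/-- A graphon is random-free if it is `{0,1}`-valued a.e. on `[0,1]²`. -/
def IsRandomFree (W : ℝ → ℝ → ℝ) : Prop :=
  ∀ᵐ p ∂(MeasureTheory.volume.restrict ((Set.Icc (0:ℝ) 1) ×ˢ (Set.Icc (0:ℝ) 1))),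
    W (Prod.fst p) (Prod.snd p) = 0 ∨ W (Prod.fst p) (Prod.snd p) = 1


/-- `N_□(n, δ; A)`: the number of graphs `G` on `{1,…,n}` with
`inf_{W ∈ A} δ_□(W_G, W) ≤ δ`. -/
def NCutSet (n : ℕ) (δ : ℝ) (A : Set (ℝ → ℝ → ℝ)) : ℕ :=
  Nat.card {G : SimpleGraph (Fin n) //
    sInf ((fun W => deltaCut (graphonOfGraph G) W) '' A) ≤ δ}

/-- Compactness (sequential, equivalent for pseudometric spaces) of a set of graphons
with respect to the pseudometric `δ_□`. -/
def CutCompact (A : Set (ℝ → ℝ → ℝ)) : Prop :=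
  ∀ f : ℕ → (ℝ → ℝ → ℝ), (∀ m, f m ∈ A) →
    ∃ W ∈ A, ∃ φ : ℕ → ℕ, StrictMono φ ∧
      Filter.Tendsto (fun m => deltaCut (f (φ m)) W) Filter.atTop (nhds 0)

/-- Lebesgue measure on `[0,1]`. -/
def lam : Measure ℝ := volume.restrict (Set.Icc (0:ℝ) 1)

instance lam_prob : IsProbabilityMeasure lam := by
  constructor
  simp [lam]

lemma lam_restrict {S : Set ℝ} (hS : MeasurableSet S) (h : S ⊆ Icc 0 1) :
    lam.restrict S = volume.restrict S := by
  unfold lam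
  rw [Measure.restrict_restrict hS, inter_eq_self_of_subset_left h]

lemma bdd_integrable {D : ℝ → ℝ → ℝ} (hD : Measurable (Function.uncurry D)) {B : ℝ}
    (hB : ∀ x y, |D x y| ≤ B) (μ ν : Measure ℝ) [IsFiniteMeasure μ] [IsFiniteMeasure ν] :
    Integrable (fun p : ℝ × ℝ => D p.1 p.2) (μ.prod ν) := by
  refine Integrable.of_bound (C := B) hD.aestronglyMeasurable ?_
  filter_upwards with p
  exact hB _ _

lemma finite_of_le_lam {μ : Measure ℝ} (h : μ ≤ lam) : IsFiniteMeasure μ :=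
  ⟨lt_of_le_of_lt (h univ) (measure_lt_top _ _)⟩

lemma cut_half {D : ℝ → ℝ → ℝ} (hD : Measurable (Function.uncurry D)) {B : ℝ}
    (hB : ∀ x y, |D x y| ≤ B) (μ ν : Measure ℝ) (hμ : μ ≤ lam) [IsFiniteMeasure ν] :
    ∃ S : Set ℝ, MeasurableSet S ∧ S ⊆ Icc 0 1 ∧
      ∫ p, D p.1 p.2 ∂(μ.prod ν) ≤ ∫ p, D p.1 p.2 ∂((volume.restrict S).prod ν) := by
  have := finite_of_le_lam hμ
  set Φ : ℝ → ℝ := fun x => ∫ y, D x y ∂ν with hΦ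
  have hΦm : Measurable Φ := by
    have : StronglyMeasurable (Function.uncurry D) := hD.stronglyMeasurable
    exact this.integral_prod_right.measurable
  have hS : MeasurableSet ({x | 0 < Φ x} ∩ Icc 0 1) :=
    (measurableSet_lt measurable_const hΦm).inter measurableSet_Icc
  refine ⟨{x | 0 < Φ x} ∩ Icc 0 1, hS, inter_subset_right, ?_⟩
  rw [← lam_restrict hS inter_subset_right]
  have hint := bdd_integrable hD hB
  rw [integral_prod _ (hint μ ν), integral_prod _ (hint (lam.restrict _) ν)]
  have hΦi : Integrable Φ lam := (hint lam ν).integral_prod_left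
  have hΦi' : Integrable Φ μ := (hint μ ν).integral_prod_left
  have hpos : Integrable (fun x => max (Φ x) 0) lam := hΦi.pos_part
  calc ∫ x, Φ x ∂μ ≤ ∫ x, max (Φ x) 0 ∂μ :=
        integral_mono hΦi' hΦi'.pos_part (fun x => le_max_left _ _)
    _ ≤ ∫ x, max (Φ x) 0 ∂lam :=
        integral_mono_measure hμ (Eventually.of_forall fun x => le_max_right _ _) hpos
    _ = ∫ x in ({x | 0 < Φ x} ∩ Icc 0 1), Φ x ∂lam := by
        rw [← integral_indicator hS]
        apply integral_congr_ae
        have : ∀ᵐ x ∂lam, x ∈ Icc (0:ℝ) 1 := ae_restrict_mem measurableSet_Icc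
        filter_upwards [this] with x hx
        by_cases h : 0 < Φ x
        · rw [indicator_of_mem (by exact ⟨h, hx⟩), max_eq_left h.le]
        · rw [indicator_of_notMem (by simp [h]), max_eq_right (not_lt.1 h)]

lemma cut_bdd {D : ℝ → ℝ → ℝ} {B : ℝ} (hB : ∀ x y, |D x y| ≤ B) :
    BddAbove { r : ℝ | ∃ S T : Set ℝ, MeasurableSet S ∧ MeasurableSet T ∧
    S ⊆ Set.Icc 0 1 ∧ T ⊆ Set.Icc 0 1 ∧ r = |∫ p in S ×ˢ T, D p.1 p.2| } := by
  refine ⟨B, ?_⟩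
  rintro r ⟨S, T, hS, hT, hS1, hT1, rfl⟩
  have hB0 : 0 ≤ B := (abs_nonneg _).trans (hB 0 0)
  have hv : volume (S ×ˢ T) ≤ 1 := by
    rw [Measure.volume_eq_prod, Measure.prod_prod]
    have h1 : volume S ≤ 1 := (measure_mono hS1).trans (by simp)
    have h2 : volume T ≤ 1 := (measure_mono hT1).trans (by simp)
    calc volume S * volume T ≤ 1 * 1 := mul_le_mul' h1 h2
      _ = 1 := one_mul 1
  have := norm_setIntegral_le_of_norm_le_const (μ := volume) (s := S ×ˢ T)
    (f := fun p : ℝ × ℝ => D p.1 p.2) (C := B) (lt_of_le_of_lt hv (by simp)) (fun p _ => hB _ _)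
  refine this.trans ?_
  have : (volume (S ×ˢ T)).toReal ≤ 1 := by
    have := ENNReal.toReal_mono (by simp) hv
    simpa using this
  calc B * (volume (S ×ˢ T)).toReal ≤ B * 1 := mul_le_mul_of_nonneg_left this hB0
    _ = B := mul_one B

lemma cut_frac_aux {D : ℝ → ℝ → ℝ} (hD : Measurable (Function.uncurry D)) {B : ℝ}
    (hB : ∀ x y, |D x y| ≤ B) (μ ν : Measure ℝ) (hμ : μ ≤ lam) (hν : ν ≤ lam) :
    ∫ p, D p.1 p.2 ∂(μ.prod ν) ≤ cutNorm D := by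
  have := finite_of_le_lam hμ
  have := finite_of_le_lam hν
  obtain ⟨S, hS, hS1, h1⟩ := cut_half hD hB μ ν hμ
  have : IsFiniteMeasure (volume.restrict S) := by
    rw [← lam_restrict hS hS1]; infer_instance
  obtain ⟨T, hT, hT1, h2⟩ := cut_half (D := fun x y => D y x)
    (hD.comp measurable_swap) (fun x y => hB y x) ν (volume.restrict S) hν
  have : IsFiniteMeasure (volume.restrict T) := by
    rw [← lam_restrict hT hT1]; infer_instance
  have e1 : ∫ p, D p.2 p.1 ∂(ν.prod (volume.restrict S)) =
      ∫ p, D p.1 p.2 ∂((volume.restrict S).prod ν) :=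
    integral_prod_swap (μ := volume.restrict S) (ν := ν) (fun p : ℝ × ℝ => D p.1 p.2)
  have e2 : ∫ p, D p.2 p.1 ∂((volume.restrict T).prod (volume.restrict S)) =
      ∫ p, D p.1 p.2 ∂((volume.restrict S).prod (volume.restrict T)) :=
    integral_prod_swap (μ := volume.restrict S) (ν := volume.restrict T)
      (fun p : ℝ × ℝ => D p.1 p.2)
  rw [e1, e2, Measure.prod_restrict, ← Measure.volume_eq_prod] at h2
  refine (h1.trans h2).trans ((le_abs_self _).trans ?_)
  exact le_csSup (cut_bdd hB) ⟨S, T, hS, hT, hS1, hT1, rfl⟩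

lemma cutNorm_neg (D : ℝ → ℝ → ℝ) : cutNorm (fun x y => - D x y) = cutNorm D := by
  unfold cutNorm
  simp only [integral_neg, abs_neg]

lemma cut_frac {D : ℝ → ℝ → ℝ} (hD : Measurable (Function.uncurry D)) {B : ℝ}
    (hB : ∀ x y, |D x y| ≤ B) (μ ν : Measure ℝ) (hμ : μ ≤ lam) (hν : ν ≤ lam) :
    |∫ p, D p.1 p.2 ∂(μ.prod ν)| ≤ cutNorm D := by
  rw [abs_le']
  refine ⟨cut_frac_aux hD hB μ ν hμ hν, ?_⟩
  have := cut_frac_aux (D := fun x y => - D x y) hD.neg (B := B)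
    (fun x y => by rw [abs_neg]; exact hB x y) μ ν hμ hν
  rw [cutNorm_neg, integral_neg] at this
  exact this

lemma cutNorm_nonneg (D : ℝ → ℝ → ℝ) : 0 ≤ cutNorm D := by
  apply Real.sSup_nonneg
  rintro r ⟨S, T, -, -, -, -, rfl⟩
  exact abs_nonneg _

lemma cutNorm_le {D : ℝ → ℝ → ℝ} {c : ℝ}
    (h : ∀ S T : Set ℝ, MeasurableSet S → MeasurableSet T → S ⊆ Icc 0 1 → T ⊆ Icc 0 1 →
      |∫ p in S ×ˢ T, D p.1 p.2| ≤ c) : cutNorm D ≤ c := by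
  apply csSup_le
  · exact ⟨_, ∅, ∅, .empty, .empty, by simp, by simp, rfl⟩
  · rintro r ⟨S, T, h1, h2, h3, h4, rfl⟩
    exact h S T h1 h2 h3 h4

lemma deltaCut_bddBelow (W₁ W₂ : ℝ → ℝ → ℝ) :
    BddBelow { r : ℝ | ∃ σ₁ σ₂ : ℝ → ℝ, IsMPSelf σ₁ ∧ IsMPSelf σ₂ ∧
    r = cutNorm (fun x y => W₁ (σ₁ x) (σ₁ y) - W₂ (σ₂ x) (σ₂ y)) } := by
  refine ⟨0, ?_⟩
  rintro r ⟨σ, τ, -, -, rfl⟩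
  exact cutNorm_nonneg _

lemma isMPSelf_id : IsMPSelf id := ⟨MeasurePreserving.id _, fun _ h => h⟩

lemma deltaCut_le_dCut (W₁ W₂ : ℝ → ℝ → ℝ) : deltaCut W₁ W₂ ≤ dCut W₁ W₂ :=
  csInf_le (deltaCut_bddBelow _ _) ⟨id, id, isMPSelf_id, isMPSelf_id, rfl⟩

lemma deltaCut_nonneg (W₁ W₂ : ℝ → ℝ → ℝ) : 0 ≤ deltaCut W₁ W₂ := by
  apply Real.sInf_nonneg
  rintro r ⟨σ, τ, -, -, rfl⟩
  exact cutNorm_nonneg _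

lemma deltaCut_lt {W₁ W₂ : ℝ → ℝ → ℝ} {η : ℝ} (h : deltaCut W₁ W₂ < η) :
    ∃ σ τ : ℝ → ℝ, MeasurePreserving σ lam lam ∧ MeasurePreserving τ lam lam ∧
      cutNorm (fun x y => W₁ (σ x) (σ y) - W₂ (τ x) (τ y)) < η := by
  obtain ⟨r, ⟨σ, τ, h1, h2, rfl⟩, h3⟩ := exists_lt_of_csInf_lt
    (show Set.Nonempty { r : ℝ | ∃ σ₁ σ₂ : ℝ → ℝ, IsMPSelf σ₁ ∧ IsMPSelf σ₂ ∧
      r = cutNorm (fun x y => W₁ (σ₁ x) (σ₁ y) - W₂ (σ₂ x) (σ₂ y)) } from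
      ⟨_, id, id, isMPSelf_id, isMPSelf_id, rfl⟩) h
  exact ⟨σ, τ, h1.1, h2.1, h3⟩

/-- Cross entropy, base 2. -/
def crossEnt (w m : ℝ) : ℝ := -(w * Real.logb 2 m) - (1 - w) * Real.logb 2 (1 - m)

lemma log_two_pos' : 0 < Real.log 2 := Real.log_pos (by norm_num)

lemma gibbs_half {w m : ℝ} (hw : 0 ≤ w) (hm : 0 < m) :
    w * Real.log m ≤ w * Real.log w + (m - w) := by
  rcases hw.eq_or_lt with rfl | hw
  · simp [hm.le]
  · have h := Real.log_le_sub_one_of_pos (div_pos hm hw)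
    rw [Real.log_div hm.ne' hw.ne'] at h
    have h2 := mul_le_mul_of_nonneg_left h hw.le
    have h3 : w * (m / w - 1) = m - w := by field_simp
    linarith

lemma binEnt_le_crossEnt {w m : ℝ} (hw : w ∈ Icc (0:ℝ) 1) (hm : m ∈ Ioo (0:ℝ) 1) :
    binEnt w ≤ crossEnt w m := by
  have h1 := gibbs_half hw.1 hm.1
  have h2 := gibbs_half (w := 1 - w) (m := 1 - m) (by linarith [hw.2]) (by linarith [hm.2])
  have hl := log_two_pos'
  unfold binEnt crossEnt Real.logb
  have : (-(w * (Real.log m / Real.log 2)) - (1 - w) * (Real.log (1 - m) / Real.log 2)) -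
    (-w * (Real.log w / Real.log 2) - (1 - w) * (Real.log (1 - w) / Real.log 2)) =
    (w * Real.log w + (1 - w) * Real.log (1 - w) - w * Real.log m - (1 - w) * Real.log (1 - m))
      / Real.log 2 := by ring
  have h3 : 0 ≤ (w * Real.log w + (1 - w) * Real.log (1 - w) - w * Real.log m
      - (1 - w) * Real.log (1 - m)) / Real.log 2 := div_nonneg (by linarith) hl.le
  linarith

lemma cross_half {w m η : ℝ} (hw : w ∈ Icc (0:ℝ) 1) (hm : m ∈ Icc (0:ℝ) 1) (hη : 0 < η)
    (hη2 : η < 1/2) :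
    -(w * Real.log ((1 - 2*η) * m + η)) ≤
      -(w * Real.log w) + w * (-Real.log (1 - 2*η)) + w * (|w - m| / η) := by
  rcases hw.1.eq_or_lt with rfl | hw0
  · simp
  have hc : 0 < 1 - 2 * η := by linarith
  have hm' : η ≤ (1 - 2*η) * m + η := by nlinarith [hm.1]
  have hm0 : 0 < (1 - 2*η) * m + η := by linarith
  have h1 := Real.log_le_sub_one_of_pos (x := ((1 - 2*η) * w) / ((1 - 2*η) * m + η)) (by positivity)
  rw [Real.log_div (by positivity) hm0.ne', Real.log_mul hc.ne' hw0.ne'] at h1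
  have h2 : ((1 - 2*η) * w) / ((1 - 2*η) * m + η) - 1 ≤ |w - m| / η := by
    rw [div_sub_one hm0.ne', div_le_div_iff₀ hm0 hη]
    have ha := le_abs_self (w - m)
    have ha0 := abs_nonneg (w - m)
    have : (1 - 2 * η) * w - ((1 - 2 * η) * m + η) ≤ |w - m| := by nlinarith
    nlinarith
  have h3 : w * (Real.log (1 - 2*η) + Real.log w - Real.log ((1 - 2*η) * m + η)) ≤
      w * (|w - m| / η) := mul_le_mul_of_nonneg_left (h1.trans h2) hw0.le
  linarith

lemma crossEnt_le {w m η : ℝ} (hw : w ∈ Icc (0:ℝ) 1) (hm : m ∈ Icc (0:ℝ) 1) (hη : 0 < η)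
    (hη2 : η < 1/2) :
    crossEnt w ((1 - 2*η) * m + η) ≤
      binEnt w + (-Real.logb 2 (1 - 2*η)) + (1 / (η * Real.log 2)) * |w - m| := by
  have h1 := cross_half hw hm hη hη2
  have h2 := cross_half (w := 1 - w) (m := 1 - m) ⟨by linarith [hw.2], by linarith [hw.1]⟩
    ⟨by linarith [hm.2], by linarith [hm.1]⟩ hη hη2
  have e1 : (1 - 2*η) * (1 - m) + η = 1 - ((1 - 2*η) * m + η) := by ring
  have e2 : |1 - w - (1 - m)| = |w - m| := by
    rw [show 1 - w - (1 - m) = -(w - m) by ring, abs_neg]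
  rw [e1, e2] at h2
  have hl := log_two_pos'
  have key := div_le_div_of_nonneg_right (add_le_add h1 h2) hl.le
  unfold crossEnt binEnt Real.logb
  refine le_trans (le_of_eq ?_) (key.trans (le_of_eq ?_))
  · ring
  · ring

lemma binEnt_eq (x : ℝ) : binEnt x = Real.binEntropy x / Real.log 2 := by
  unfold binEnt Real.logb
  rw [Real.binEntropy_eq_negMulLog_add_negMulLog_one_sub]
  unfold Real.negMulLog
  ring

lemma binEnt_continuous : Continuous binEnt := by
  have : binEnt = fun x => Real.binEntropy x / Real.log 2 := funext binEnt_eq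
  rw [this]
  exact Real.binEntropy_continuous.div_const _

lemma binEnt_mem {x : ℝ} (hx : x ∈ Icc (0:ℝ) 1) : binEnt x ∈ Icc (0:ℝ) 1 := by
  rw [binEnt_eq]
  have hl := log_two_pos'
  refine ⟨div_nonneg (Real.binEntropy_nonneg hx.1 hx.2) hl.le, ?_⟩
  rw [div_le_one hl]
  exact Real.binEntropy_le_log_two

lemma binEnt_modulus {ε : ℝ} (hε : 0 < ε) : ∃ C : ℝ, 0 ≤ C ∧ ∀ a ∈ Icc (0:ℝ) 1,
    ∀ b ∈ Icc (0:ℝ) 1, binEnt a ≤ binEnt b + ε + C * |a - b| := by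
  have hu := isCompact_Icc.uniformContinuousOn_of_continuous
    (binEnt_continuous.continuousOn (s := Icc (0:ℝ) 1))
  rw [Metric.uniformContinuousOn_iff] at hu
  obtain ⟨d, hd, h⟩ := hu ε hε
  refine ⟨1 / d, by positivity, fun a ha b hb => ?_⟩
  by_cases hab : dist a b < d
  · have := h a ha b hb hab
    rw [Real.dist_eq] at this
    have h1 := (abs_lt.1 this).2
    have h2 : 0 ≤ 1 / d * |a - b| := by positivity
    linarith
  · rw [Real.dist_eq, not_lt] at hab
    have h1 : 1 ≤ 1 / d * |a - b| := by
      rw [one_div, inv_mul_eq_div, le_div_iff₀ hd]; linarith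
    linarith [(binEnt_mem ha).2, (binEnt_mem hb).1]

lemma crossEnt_eq (w m : ℝ) : crossEnt w m =
    -Real.logb 2 (1 - m) + w * (Real.logb 2 (1 - m) - Real.logb 2 m) := by
  unfold crossEnt; ring

lemma crossEnt_nonneg {w m : ℝ} (hw : w ∈ Icc (0:ℝ) 1) (hm : m ∈ Ioo (0:ℝ) 1) :
    0 ≤ crossEnt w m := (binEnt_mem hw).1.trans (binEnt_le_crossEnt hw hm)

lemma graphonEnt_eq {W : ℝ → ℝ → ℝ} (hW : IsGraphon W) :
    graphonEnt W = ∫ p, binEnt (W p.1 p.2) ∂(lam.prod lam) := by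
  unfold graphonEnt
  rw [integral_prod]
  · rfl
  · exact bdd_integrable (D := fun x y => binEnt (W x y))
      (binEnt_continuous.measurable.comp hW.2.1) (B := 1) (fun x y => by
        have := binEnt_mem (hW.2.2 x y)
        rw [abs_le]; constructor <;> linarith [this.1, this.2]) lam lam

lemma graphonEnt_mem {W : ℝ → ℝ → ℝ} (hW : IsGraphon W) : graphonEnt W ∈ Icc (0:ℝ) 1 := by
  rw [graphonEnt_eq hW]
  constructor
  · exact integral_nonneg fun p => (binEnt_mem (hW.2.2 _ _)).1
  · have h : ∫ p, binEnt (W p.1 p.2) ∂(lam.prod lam) ≤ ∫ _p : ℝ × ℝ, (1:ℝ) ∂(lam.prod lam) := by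
      apply integral_mono_of_nonneg
      · exact Eventually.of_forall fun p => (binEnt_mem (hW.2.2 _ _)).1
      · exact integrable_const _
      · exact Eventually.of_forall fun p => (binEnt_mem (hW.2.2 _ _)).2
    simpa using h

lemma le_lam_of_sum {k : ℕ} {ν : Fin k → Measure ℝ} (hν : ∑ i, ν i = lam) (i : Fin k) :
    ν i ≤ lam := by
  intro B
  rw [← hν, Measure.finsetSum_apply]
  exact Finset.single_le_sum (f := fun i => ν i B) (fun _ _ => zero_le) (Finset.mem_univ i)

lemma sum_withDensity {k : ℕ} (f : Fin k → ℝ → ENNReal) (hf : ∀ i, Measurable (f i)) :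
    ∑ i, lam.withDensity (f i) = lam.withDensity (fun x => ∑ i, f i x) := by
  ext B hB
  rw [Measure.finsetSum_apply, withDensity_apply _ hB,
    lintegral_finsetSum _ (fun i _ => hf i)]
  exact Finset.sum_congr rfl fun i _ => withDensity_apply _ hB

lemma pullback {k : ℕ} {ν : Fin k → Measure ℝ} (hν : ∑ i, ν i = lam) {τ : ℝ → ℝ}
    (hτ : MeasurePreserving τ lam lam) :
    ∃ ν' : Fin k → Measure ℝ, ∑ i, ν' i = lam ∧ ∀ i, (ν' i).map τ = ν i := by
  have hfin : ∀ i, IsFiniteMeasure (ν i) := fun i => finite_of_le_lam (le_lam_of_sum hν i)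
  set f : Fin k → ℝ → ENNReal := fun i => (ν i).rnDeriv lam with hfdef
  have hf : ∀ i, Measurable (f i) := fun i => Measure.measurable_rnDeriv _ _
  have hfν : ∀ i, lam.withDensity (f i) = ν i := fun i =>
    Measure.withDensity_rnDeriv_eq _ _ (Measure.absolutelyContinuous_of_le (le_lam_of_sum hν i))
  have hsum : ∀ᵐ x ∂lam, ∑ i, f i x = 1 := by
    have h1 : lam.withDensity (fun x => ∑ i, f i x) = lam.withDensity (fun _ => 1) := by
      rw [← sum_withDensity f hf]
      simp only [hfν, hν]
      exact withDensity_one.symm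
    have := (withDensity_eq_iff_of_sigmaFinite
      (Finset.measurable_sum _ (fun i _ => hf i)).aemeasurable aemeasurable_const).1 (by
        convert h1 using 2)
    filter_upwards [this] with x hx
    simpa using hx
  refine ⟨fun i => lam.withDensity (fun x => f i (τ x)), ?_, ?_⟩
  · rw [sum_withDensity (fun i x => f i (τ x)) (fun i => (hf i).comp hτ.measurable)]
    have h2 : ∀ᵐ x ∂lam, ∑ i, f i (τ x) = 1 := hτ.quasiMeasurePreserving.ae hsum
    rw [withDensity_congr_ae (g := fun _ => 1) h2]
    exact withDensity_one
  · intro i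
    ext B hB
    rw [Measure.map_apply hτ.measurable hB, withDensity_apply _ (hτ.measurable hB),
      hτ.setLIntegral_comp_preimage hB (hf i), ← withDensity_apply _ hB, hfν]

lemma integral_split {k : ℕ} {ν : Fin k → Measure ℝ} (hν : ∑ i, ν i = lam)
    {D : ℝ → ℝ → ℝ} (hD : Measurable (Function.uncurry D)) {B : ℝ}
    (hB : ∀ x y, |D x y| ≤ B) :
    ∫ p, D p.1 p.2 ∂(lam.prod lam) = ∑ i, ∑ j, ∫ p, D p.1 p.2 ∂((ν i).prod (ν j)) := by
  have hfin : ∀ i, IsFiniteMeasure (ν i) := fun i => finite_of_le_lam (le_lam_of_sum hν i)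
  have h : lam.prod lam = ∑ q : Fin k × Fin k, (ν q.1).prod (ν q.2) := by
    rw [← Measure.sum_fintype, ← Measure.prod_sum, Measure.sum_fintype, hν]
  rw [h, integral_finsetSum_measure (fun q _ => bdd_integrable hD hB _ _), Fintype.sum_prod_type]

/-- The certificate: some fractional partition of `[0,1]` gives `U` cross entropy at most `c`
with respect to the step function `m`. -/
def Cert (k : ℕ) (m : Fin k → Fin k → ℝ) (U : ℝ → ℝ → ℝ) (c : ℝ) : Prop :=
  ∃ ν : Fin k → Measure ℝ, ∑ i, ν i = lam ∧
    ∑ i, ∑ j, ∫ p, crossEnt (U p.1 p.2) (m i j) ∂((ν i).prod (ν j)) ≤ c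

lemma cross_meas {U : ℝ → ℝ → ℝ} (hU : Measurable (Function.uncurry U)) (m : ℝ) :
    Measurable (Function.uncurry fun x y => crossEnt (U x y) m) := by
  have : (Function.uncurry fun x y => crossEnt (U x y) m) =
      (fun w => crossEnt w m) ∘ (Function.uncurry U) := by
    ext p; rfl
  rw [this]
  refine Measurable.comp ?_ hU
  unfold crossEnt
  fun_prop

lemma cross_bdd {w : ℝ} (hw : w ∈ Icc (0:ℝ) 1) (m : ℝ) :
    |crossEnt w m| ≤ |Real.logb 2 m| + |Real.logb 2 (1 - m)| := by
  unfold crossEnt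
  have h1 : |-(w * Real.logb 2 m)| ≤ |Real.logb 2 m| := by
    rw [abs_neg, abs_mul, abs_of_nonneg hw.1]
    exact mul_le_of_le_one_left (abs_nonneg _) hw.2
  have h2 : |(1 - w) * Real.logb 2 (1 - m)| ≤ |Real.logb 2 (1 - m)| := by
    rw [abs_mul, abs_of_nonneg (by linarith [hw.2])]
    exact mul_le_of_le_one_left (abs_nonneg _) (by linarith [hw.1])
  exact (abs_sub _ _).trans (add_le_add h1 h2)

lemma Cert.ent_le {k : ℕ} {m : Fin k → Fin k → ℝ} (hm : ∀ i j, m i j ∈ Ioo (0:ℝ) 1)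
    {U : ℝ → ℝ → ℝ} (hU : IsGraphon U) {c : ℝ} (h : Cert k m U c) : graphonEnt U ≤ c := by
  obtain ⟨ν, hν, hc⟩ := h
  have hfin : ∀ i, IsFiniteMeasure (ν i) := fun i => finite_of_le_lam (le_lam_of_sum hν i)
  have hmeas : Measurable (Function.uncurry fun x y => binEnt (U x y)) :=
    binEnt_continuous.measurable.comp hU.2.1
  have hbd : ∀ x y, |binEnt (U x y)| ≤ 1 := fun x y => by
    have := binEnt_mem (hU.2.2 x y)
    rw [abs_le]; constructor <;> linarith [this.1, this.2]
  refine le_trans ?_ hc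
  rw [graphonEnt_eq hU, integral_split hν hmeas hbd]
  refine Finset.sum_le_sum fun i _ => Finset.sum_le_sum fun j _ => ?_
  refine integral_mono (bdd_integrable hmeas hbd _ _)
    (bdd_integrable (cross_meas hU.2.1 _) (fun x y => cross_bdd (hU.2.2 x y) _) _ _) ?_
  intro p
  exact binEnt_le_crossEnt (hU.2.2 _ _) (hm i j)

lemma map_cross {U : ℝ → ℝ → ℝ} (hU : IsGraphon U) {σ : ℝ → ℝ} (hσ : Measurable σ) (m : ℝ)
    (μ ν : Measure ℝ) [IsFiniteMeasure μ] [IsFiniteMeasure ν] :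
    ∫ p, crossEnt (U p.1 p.2) m ∂((μ.map σ).prod (ν.map σ)) =
      ∫ p, crossEnt (U (σ p.1) (σ p.2)) m ∂(μ.prod ν) := by
  rw [Measure.map_prod_map _ _ hσ hσ, integral_map (hσ.prodMap hσ).aemeasurable]
  · rfl
  · exact (cross_meas hU.2.1 m).aestronglyMeasurable

lemma Cert.transfer {k : ℕ} (m : Fin k → Fin k → ℝ) : ∃ K : ℝ, 0 ≤ K ∧
    ∀ (U W : ℝ → ℝ → ℝ) (η c : ℝ), IsGraphon U → IsGraphon W → deltaCut U W < η →
      Cert k m W c → Cert k m U (c + K * η) := by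
  refine ⟨∑ i, ∑ j, |Real.logb 2 (1 - m i j) - Real.logb 2 (m i j)|, by positivity, ?_⟩
  rintro U W η c hU hW hδ ⟨ν, hν, hc⟩
  obtain ⟨σ, τ, hσ, hτ, hcut⟩ := deltaCut_lt hδ
  obtain ⟨ν', hν', hmap⟩ := pullback hν hτ
  have hfin' : ∀ i, IsFiniteMeasure (ν' i) := fun i => finite_of_le_lam (le_lam_of_sum hν' i)
  refine ⟨fun i => (ν' i).map σ, ?_, ?_⟩
  · rw [← Measure.map_finset_sum' hσ.measurable.aemeasurable, hν', hσ.map_eq]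
  have hUσ : Measurable (Function.uncurry fun x y => U (σ x) (σ y)) :=
    hU.2.1.comp (hσ.measurable.prodMap hσ.measurable)
  have hWτ : Measurable (Function.uncurry fun x y => W (τ x) (τ y)) :=
    hW.2.1.comp (hτ.measurable.prodMap hτ.measurable)
  have hDb : ∀ x y, |U (σ x) (σ y) - W (τ x) (τ y)| ≤ 1 := fun x y => by
    have h1 := hU.2.2 (σ x) (σ y)
    have h2 := hW.2.2 (τ x) (τ y)
    rw [abs_le]; constructor <;> linarith [h1.1, h1.2, h2.1, h2.2]
  have hterm : ∀ i j, ∫ p, crossEnt (U p.1 p.2) (m i j) ∂(((ν' i).map σ).prod ((ν' j).map σ)) ≤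
      ∫ p, crossEnt (W p.1 p.2) (m i j) ∂((ν i).prod (ν j)) +
        |Real.logb 2 (1 - m i j) - Real.logb 2 (m i j)| * η := by
    intro i j
    rw [← hmap i, ← hmap j, map_cross hU hσ.measurable, map_cross hW hτ.measurable]
    have i1 := bdd_integrable (cross_meas hUσ (m i j)) (fun x y => cross_bdd (hU.2.2 _ _) _)
      (ν' i) (ν' j)
    have i2 := bdd_integrable (cross_meas hWτ (m i j)) (fun x y => cross_bdd (hW.2.2 _ _) _)
      (ν' i) (ν' j)
    rw [← sub_le_iff_le_add', ← integral_sub i1 i2]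
    have e : ∀ p : ℝ × ℝ, crossEnt (U (σ p.1) (σ p.2)) (m i j) -
        crossEnt (W (τ p.1) (τ p.2)) (m i j) =
        (Real.logb 2 (1 - m i j) - Real.logb 2 (m i j)) *
          (U (σ p.1) (σ p.2) - W (τ p.1) (τ p.2)) := by
      intro p; rw [crossEnt_eq, crossEnt_eq]; ring
    simp only [e]
    rw [integral_const_mul]
    have hcf := cut_frac (D := fun x y => U (σ x) (σ y) - W (τ x) (τ y)) (hUσ.sub hWτ) hDb (ν' i) (ν' j) (le_lam_of_sum hν' i)
      (le_lam_of_sum hν' j)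
    refine (le_abs_self _).trans ?_
    rw [abs_mul]
    exact mul_le_mul_of_nonneg_left (hcf.trans hcut.le) (abs_nonneg _)
  calc _ ≤ ∑ i, ∑ j, (∫ p, crossEnt (W p.1 p.2) (m i j) ∂((ν i).prod (ν j)) +
        |Real.logb 2 (1 - m i j) - Real.logb 2 (m i j)| * η) :=
        Finset.sum_le_sum fun i _ => Finset.sum_le_sum fun j _ => hterm i j
    _ ≤ _ := by
        simp only [Finset.sum_add_distrib, ← Finset.sum_mul]
        linarith

/-- The `u`-th cell of the partition of `(0,1]` into `n` equal intervals. -/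
def cell (n : ℕ) (u : Fin n) : Set ℝ := Set.Ioc (((u : ℕ) : ℝ) / n) ((((u : ℕ) : ℝ) + 1) / n)

lemma mem_cell_iff {n : ℕ} (u : Fin n) (x : ℝ) :
    x ∈ cell n u ↔ ⌈(n : ℝ) * x⌉ = ((u : ℕ) : ℤ) + 1 := by
  have hn : (0:ℝ) < n := by exact_mod_cast (Nat.zero_lt_of_lt u.2)
  rw [Int.ceil_eq_iff]
  unfold cell
  rw [mem_Ioc, div_lt_iff₀ hn, le_div_iff₀ hn]
  push_cast
  rw [mul_comm x]
  simp

lemma cell_unique {n : ℕ} {u v : Fin n} {x : ℝ} (hu : x ∈ cell n u) (hv : x ∈ cell n v) :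
    u = v := by
  rw [mem_cell_iff] at hu hv
  ext
  have := hu.symm.trans hv
  omega

lemma cell_cover {n : ℕ} (hn : 0 < n) {x : ℝ} (hx : x ∈ Ioc (0:ℝ) 1) : ∃ u, x ∈ cell n u := by
  have hn' : (0:ℝ) < n := by exact_mod_cast hn
  have h1 : 0 < ⌈(n : ℝ) * x⌉ := Int.ceil_pos.2 (mul_pos hn' hx.1)
  have h2 : ⌈(n : ℝ) * x⌉ ≤ n := by
    rw [Int.ceil_le]; push_cast; nlinarith [hx.2]
  refine ⟨⟨(⌈(n : ℝ) * x⌉ - 1).toNat, by omega⟩, ?_⟩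
  rw [mem_cell_iff]
  simp only
  omega

lemma cell_meas (n : ℕ) (u : Fin n) : MeasurableSet (cell n u) := measurableSet_Ioc

lemma cell_subset {n : ℕ} (u : Fin n) : cell n u ⊆ Icc 0 1 := by
  have hn : (0:ℝ) < n := by exact_mod_cast (Nat.zero_lt_of_lt u.2)
  intro x hx
  have h1 : (0:ℝ) ≤ ((u : ℕ) : ℝ) / n := by positivity
  have h2 : (((u : ℕ) : ℝ) + 1) / n ≤ 1 := by
    rw [div_le_one hn]; exact_mod_cast u.2
  exact ⟨h1.trans hx.1.le, hx.2.trans h2⟩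

lemma lam_cell {n : ℕ} (u : Fin n) : lam (cell n u) = ENNReal.ofReal (1 / n) := by
  have : lam (cell n u) = volume (cell n u) := by
    unfold lam
    rw [Measure.restrict_apply (cell_meas n u), inter_eq_self_of_subset_left (cell_subset u)]
  rw [this]
  unfold cell
  rw [Real.volume_Ioc]
  congr 1
  ring

lemma lam_real_cell {n : ℕ} (u : Fin n) : lam.real (cell n u) = 1 / n := by
  rw [Measure.real, lam_cell, ENNReal.toReal_ofReal (by positivity)]

/-- The measure `lam` restricted to a cell. -/
def cellM (n : ℕ) (u : Fin n) : Measure ℝ := lam.restrict (cell n u)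

instance cellM_fin (n : ℕ) (u : Fin n) : IsFiniteMeasure (cellM n u) := by
  unfold cellM; infer_instance

lemma sum_cellM {n : ℕ} (hn : 0 < n) : ∑ u, cellM n u = lam := by
  have h : ⋃ u, cell n u = Ioc 0 1 := by
    ext x
    simp only [mem_iUnion]
    constructor
    · rintro ⟨u, hu⟩
      refine ⟨?_, (cell_subset u hu).2⟩
      have : (0:ℝ) ≤ ((u : ℕ) : ℝ) / n := by positivity
      exact this.trans_lt hu.1
    · exact cell_cover hn
  have h2 := Measure.restrict_iUnion (μ := lam) (s := fun u => cell n u)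
    (fun u v huv => Set.disjoint_left.2 fun x h1 h2 => huv (cell_unique h1 h2)) (cell_meas n)
  rw [Measure.sum_fintype, h] at h2
  unfold cellM
  rw [← h2, lam_restrict measurableSet_Ioc Ioc_subset_Icc_self]
  exact restrict_Ioc_eq_restrict_Icc

open Classical in
/-- The adjacency matrix of a graph, with real entries. -/
def adjR {n : ℕ} (G : SimpleGraph (Fin n)) (u v : Fin n) : ℝ := if G.Adj u v then 1 else 0

lemma graphonOfGraph_cell {n : ℕ} (G : SimpleGraph (Fin n)) {u v : Fin n} {x y : ℝ}
    (hx : x ∈ cell n u) (hy : y ∈ cell n v) :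
    graphonOfGraph G x y = adjR G u v := by
  classical
  unfold adjR
  unfold graphonOfGraph
  simp only [← mem_cell_iff]
  by_cases h : G.Adj u v
  · rw [if_pos ⟨u, v, h, hx, hy⟩]; simp [h]
  · rw [if_neg]
    · simp [h]
    · rintro ⟨i, j, hij, hi, hj⟩
      rw [cell_unique hx hi, cell_unique hy hj] at h
      exact h hij

lemma graphonOfGraph_isGraphon {n : ℕ} (G : SimpleGraph (Fin n)) :
    IsGraphon (graphonOfGraph G) := by
  classical
  refine ⟨?_, ?_, ?_⟩
  · intro x y
    unfold graphonOfGraph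
    congr 1
    apply propext
    constructor
    · rintro ⟨i, j, h, h1, h2⟩; exact ⟨j, i, h.symm, h2, h1⟩
    · rintro ⟨i, j, h, h1, h2⟩; exact ⟨j, i, h.symm, h2, h1⟩
  · unfold graphonOfGraph
    simp only [← mem_cell_iff]
    apply Measurable.ite _ measurable_const measurable_const
    have : {a : ℝ × ℝ | ∃ i j : Fin n, G.Adj i j ∧ a.1 ∈ cell n i ∧ a.2 ∈ cell n j} =
        ⋃ i, ⋃ j, ⋃ (_ : G.Adj i j), (cell n i) ×ˢ (cell n j) := by
      ext a
      simp only [mem_ofPred_eq, mem_iUnion, mem_prod, exists_prop]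
    rw [this]
    exact MeasurableSet.iUnion fun i => MeasurableSet.iUnion fun j => MeasurableSet.iUnion fun _ =>
      (cell_meas n i).prod (cell_meas n j)
  · intro x y
    unfold graphonOfGraph
    split_ifs <;> simp

lemma ae_cell {n : ℕ} (u v : Fin n) :
    ∀ᵐ p ∂((cellM n u).prod (cellM n v)), p.1 ∈ cell n u ∧ p.2 ∈ cell n v := by
  unfold cellM
  rw [Measure.prod_restrict]
  filter_upwards [ae_restrict_mem ((cell_meas n u).prod (cell_meas n v))] with p hp
  exact hp

lemma clip_le {w t : ℝ} (hw : w ∈ Icc (0:ℝ) 1) : |w - max 0 (min 1 t)| ≤ |w - t| := by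
  have h1 : w = max 0 (min 1 w) := by rw [min_eq_right hw.2, max_eq_right hw.1]
  conv_lhs => rw [h1]
  rw [max_comm 0 (min 1 w), max_comm 0 (min 1 t)]
  refine (abs_max_sub_max_le_abs _ _ _).trans ?_
  rw [min_comm 1 w, min_comm 1 t]
  exact (abs_min_sub_min_le_max w 1 t 1).trans (by simp)

lemma approx {W : ℝ → ℝ → ℝ} (hW : IsGraphon W) {ε : ℝ} (hε : 0 < ε) :
    ∃ n0 : ℕ, ∀ n ≥ n0, 0 < n → ∃ m : Fin n → Fin n → ℝ, (∀ u v, m u v = m v u) ∧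
      (∀ u v, m u v ∈ Icc (0:ℝ) 1) ∧
      ∑ u, ∑ v, ∫ p, |W p.1 p.2 - m u v| ∂((cellM n u).prod (cellM n v)) ≤ ε := by
  have hWb : ∀ x y, |W x y| ≤ 1 := fun x y => by
    rw [abs_of_nonneg (hW.2.2 x y).1]; exact (hW.2.2 x y).2
  obtain ⟨g, hgc, hgi, hgcont, -⟩ := (bdd_integrable hW.2.1 hWb lam
    lam).exists_hasCompactSupport_integral_sub_le (ε := ε / 2) (by positivity)
  obtain ⟨C, hC⟩ := hgc.exists_bound_of_continuous hgcont
  have huc := hgc.uniformContinuous_of_continuous hgcont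
  rw [Metric.uniformContinuous_iff] at huc
  obtain ⟨d, hd, huc⟩ := huc (ε / 2) (by positivity)
  obtain ⟨n0, hn0⟩ := exists_nat_gt (1 / d)
  refine ⟨n0, fun n hn hnpos => ?_⟩
  have hnpos' : (0:ℝ) < n := by exact_mod_cast hnpos
  have hnd : 1 / (n:ℝ) < d := by
    rw [div_lt_iff₀ hnpos', mul_comm, ← div_lt_iff₀ hd]
    exact hn0.trans_le (by exact_mod_cast hn)
  set a : Fin n → ℝ := fun u => (((u : ℕ) : ℝ) + 1) / n with ha
  have hdist : ∀ u, ∀ x ∈ cell n u, dist x (a u) < d := by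
    intro u x hx
    rw [Real.dist_eq, abs_lt]
    have h1 := hx.1
    have h2 := hx.2
    have h3 : a u = ((u : ℕ) : ℝ) / n + 1 / n := by simp only [ha]; ring
    constructor
    · rw [h3]; linarith
    · have : x ≤ a u := h2
      linarith
  refine ⟨fun u v => max 0 (min 1 ((g (a u, a v) + g (a v, a u)) / 2)), ?_, ?_, ?_⟩
  · intro u v; simp only; rw [add_comm (g (a u, a v))]
  · intro u v
    exact ⟨le_max_left _ _, max_le zero_le_one (min_le_left _ _)⟩
  -- the dominating function
  set D : ℝ → ℝ → ℝ := fun x y => |W x y - g (x, y)| / 2 + |W y x - g (y, x)| / 2 + ε / 2 with hD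
  have hg_m : Measurable g := hgcont.measurable
  have hW' : Measurable (fun p : ℝ × ℝ => W p.1 p.2) := hW.2.1
  have hW'' : Measurable (fun p : ℝ × ℝ => W p.2 p.1) := hW.2.1.comp measurable_swap
  have hE1m : Measurable (Function.uncurry fun x y => |W x y - g (x, y)|) := by
    have : Measurable (fun p : ℝ × ℝ => |W p.1 p.2 - g p|) := by fun_prop
    exact this
  have hE2m : Measurable (Function.uncurry fun x y => |W y x - g (y, x)|) :=
    hE1m.comp measurable_swap
  have hE1b : ∀ x y, |W x y - g (x, y)| ≤ 1 + C := fun x y =>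
    (abs_sub _ _).trans (add_le_add (hWb x y) (hC _))
  have hDm : Measurable (Function.uncurry D) :=
    ((hE1m.div_const 2).add (hE2m.div_const 2)).add_const _
  have hDb : ∀ x y, |D x y| ≤ (1 + C) / 2 + (1 + C) / 2 + ε / 2 := fun x y => by
    rw [abs_of_nonneg (by positivity)]
    simp only [hD]
    linarith [hE1b x y, hE1b y x]
  have hint1 : ∫ p, |W p.1 p.2 - g (p.1, p.2)| ∂(lam.prod lam) ≤ ε / 2 := hgi
  have hint2 : ∫ p, |W p.2 p.1 - g (p.2, p.1)| ∂(lam.prod lam) ≤ ε / 2 := by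
    rw [← integral_prod_swap (μ := lam) (ν := lam)] at hint1
    exact hint1
  have hDint : ∫ p, D p.1 p.2 ∂(lam.prod lam) ≤ ε := by
    have i1 := bdd_integrable hE1m (B := 1 + C)
      (fun x y => by rw [abs_abs]; exact hE1b x y) lam lam
    have i2 := bdd_integrable hE2m (B := 1 + C)
      (fun x y => by rw [abs_abs]; exact hE1b y x) lam lam
    simp only [hD]
    have i3 : Integrable (fun p : ℝ × ℝ => |W p.1 p.2 - g (p.1, p.2)| / 2 +
      |W p.2 p.1 - g (p.2, p.1)| / 2) (lam.prod lam) := (i1.div_const 2).add (i2.div_const 2)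
    rw [integral_add i3 (integrable_const _),
      integral_add (i1.div_const 2) (i2.div_const 2), integral_div, integral_div]
    simp only [integral_const, probReal_univ, one_smul]
    linarith
  refine le_trans ?_ hDint
  rw [integral_split (sum_cellM hnpos) hDm hDb]
  refine Finset.sum_le_sum fun u _ => Finset.sum_le_sum fun v _ => ?_
  refine integral_mono_of_nonneg (Eventually.of_forall fun p => abs_nonneg _)
    (bdd_integrable hDm hDb _ _) ?_
  filter_upwards [ae_cell u v] with p hp
  obtain ⟨hp1, hp2⟩ := hp
  simp only [hD]
  refine (clip_le (hW.2.2 _ _)).trans ?_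
  have d1 : dist (g (p.1, p.2)) (g (a u, a v)) < ε / 2 := huc (by
    rw [Prod.dist_eq]; exact max_lt (hdist u _ hp1) (hdist v _ hp2))
  have d2 : dist (g (p.2, p.1)) (g (a v, a u)) < ε / 2 := huc (by
    rw [Prod.dist_eq]; exact max_lt (hdist v _ hp2) (hdist u _ hp1))
  rw [Real.dist_eq] at d1 d2
  have e : W p.1 p.2 - (g (a u, a v) + g (a v, a u)) / 2 =
      (W p.1 p.2 - g (p.1, p.2)) / 2 + (W p.2 p.1 - g (p.2, p.1)) / 2 +
      ((g (p.1, p.2) - g (a u, a v)) / 2 + (g (p.2, p.1) - g (a v, a u)) / 2) := by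
    rw [hW.1 p.2 p.1]; ring
  rw [e]
  refine (abs_add_three _ _ _).trans ?_
  have f := abs_add_le ((g (p.1, p.2) - g (a u, a v)) / 2) ((g (p.2, p.1) - g (a v, a u)) / 2)
  have h2 : ∀ t : ℝ, |t / 2| = |t| / 2 := fun t => by rw [abs_div, abs_two]
  simp only [h2] at f ⊢
  linarith

lemma exists_eta {ε : ℝ} (hε : 0 < ε) : ∃ η : ℚ, 0 < (η:ℝ) ∧ (η:ℝ) < 1/2 ∧
    -Real.logb 2 (1 - 2 * (η:ℝ)) ≤ ε := by
  have hc : ContinuousAt (fun t : ℝ => -Real.logb 2 (1 - 2 * t)) 0 := by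
    unfold Real.logb
    refine ContinuousAt.neg (ContinuousAt.div_const (ContinuousAt.log (by fun_prop) (by norm_num)) _)
  rw [Metric.continuousAt_iff] at hc
  obtain ⟨d, hd, h⟩ := hc ε hε
  obtain ⟨η, h1, h2⟩ := exists_rat_btwn (lt_min hd (by norm_num : (0:ℝ) < 1/2))
  refine ⟨η, h1, h2.trans_le (min_le_right _ _), ?_⟩
  have := h (x := (η:ℝ)) (by
    rw [Real.dist_eq, sub_zero, abs_of_pos h1]; exact h2.trans_le (min_le_left _ _))
  rw [Real.dist_eq] at this
  have h3 := (abs_lt.1 this).2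
  simp at h3 ⊢
  linarith

lemma sum_cell_aux {n : ℕ} (hn : 0 < n) {W : ℝ → ℝ → ℝ} (hW : IsGraphon W)
    (m : Fin n → Fin n → ℝ) (F : Fin n → Fin n → ℝ → ℝ) {B : ℝ → ℝ} (hBm : Measurable B)
    {b : ℝ} (hBb : ∀ w ∈ Icc (0:ℝ) 1, |B w| ≤ b) {a C : ℝ}
    (hF0 : ∀ u v, ∀ w ∈ Icc (0:ℝ) 1, 0 ≤ F u v w)
    (hF : ∀ u v, ∀ w ∈ Icc (0:ℝ) 1, F u v w ≤ B w + a + C * |w - m u v|) :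
    ∑ u, ∑ v, ∫ p, F u v (W p.1 p.2) ∂((cellM n u).prod (cellM n v)) ≤
      ∫ p, B (W p.1 p.2) ∂(lam.prod lam) + a +
        C * ∑ u, ∑ v, ∫ p, |W p.1 p.2 - m u v| ∂((cellM n u).prod (cellM n v)) := by
  have hBa : Measurable (Function.uncurry fun x y => B (W x y) + a) :=
    (hBm.comp hW.2.1).add_const a
  have hBab : ∀ x y, |B (W x y) + a| ≤ b + |a| := fun x y =>
    (abs_add_le _ _).trans (add_le_add (hBb _ (hW.2.2 x y)) le_rfl)
  have e1 : ∫ p, B (W p.1 p.2) ∂(lam.prod lam) + a =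
      ∫ p, (B (W p.1 p.2) + a) ∂(lam.prod lam) := by
    rw [integral_add (bdd_integrable (D := fun x y => B (W x y)) (hBm.comp hW.2.1)
      (fun x y => hBb _ (hW.2.2 x y)) lam lam)
      (integrable_const a)]
    simp
  rw [e1, integral_split (sum_cellM hn) hBa hBab, Finset.mul_sum, ← Finset.sum_add_distrib]
  refine Finset.sum_le_sum fun u _ => ?_
  rw [Finset.mul_sum, ← Finset.sum_add_distrib]
  refine Finset.sum_le_sum fun v _ => ?_
  have hWm : Measurable (Function.uncurry fun x y => |W x y - m u v|) :=
    (hW.2.1.sub_const (m u v)).abs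
  have i2 := bdd_integrable hWm (B := 1 + |m u v|) (fun x y => by
    rw [abs_abs]
    refine (abs_sub _ _).trans (add_le_add ?_ le_rfl)
    rw [abs_of_nonneg (hW.2.2 x y).1]; exact (hW.2.2 x y).2) (cellM n u) (cellM n v)
  have i1 := bdd_integrable hBa hBab (cellM n u) (cellM n v)
  rw [← integral_const_mul, ← integral_add i1 (i2.const_mul C)]
  refine integral_mono_of_nonneg (Eventually.of_forall fun p => hF0 _ _ _ (hW.2.2 _ _))
    (i1.add (i2.const_mul C)) (Eventually.of_forall fun p => ?_)
  exact hF _ _ _ (hW.2.2 _ _)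

lemma cert_exists {W : ℝ → ℝ → ℝ} (hW : IsGraphon W) {ε : ℝ} (hε : 0 < ε) :
    ∃ (k : ℕ) (m : Fin k → Fin k → ℚ), (∀ i j, m i j = m j i) ∧
      (∀ i j, ((m i j : ℚ) : ℝ) ∈ Ioo (0:ℝ) 1) ∧
      Cert k (fun i j => ((m i j : ℚ) : ℝ)) W (graphonEnt W + ε) := by
  obtain ⟨η, hη0, hη2, hη⟩ := exists_eta (show (0:ℝ) < ε / 3 by positivity)
  have hl := log_two_pos'
  set C : ℝ := 1 / ((η:ℝ) * Real.log 2) with hC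
  have hC0 : 0 < C := by positivity
  obtain ⟨n0, hn0⟩ := approx hW (show (0:ℝ) < ε / 3 / C by positivity)
  obtain ⟨r, hr⟩ := exists_nat_gt (C / (ε / 3))
  have hr0 : (0:ℝ) < r := lt_trans (by positivity) hr
  have hCr : C / r ≤ ε / 3 := by
    rw [div_lt_iff₀ (by positivity)] at hr
    rw [div_le_iff₀ hr0]; linarith
  set n := n0 + 1 with hn
  obtain ⟨m, hms, hmI, hme⟩ := hn0 n (by omega) (by omega)
  set q : Fin n → Fin n → ℚ := fun u v => (⌊m u v * r⌋ : ℚ) / (r : ℚ) with hq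
  have hq_cast : ∀ u v, ((q u v : ℚ) : ℝ) = (⌊m u v * r⌋ : ℝ) / r := fun u v => by
    simp only [hq]; push_cast; rfl
  have hqI : ∀ u v, ((q u v : ℚ) : ℝ) ∈ Icc (0:ℝ) 1 := by
    intro u v
    rw [hq_cast]
    have h0 : 0 ≤ ⌊m u v * r⌋ := Int.floor_nonneg.2 (mul_nonneg (hmI u v).1 hr0.le)
    have h1 : (⌊m u v * r⌋ : ℝ) ≤ r := (Int.floor_le _).trans (by nlinarith [(hmI u v).2])
    constructor
    · have : (0:ℝ) ≤ (⌊m u v * r⌋ : ℝ) := by exact_mod_cast h0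
      positivity
    · rw [div_le_one hr0]; exact h1
  have hqd : ∀ u v, |m u v - (q u v : ℝ)| ≤ 1 / r := by
    intro u v
    rw [hq_cast]
    have h1 := Int.floor_le (m u v * r)
    have h2 := Int.lt_floor_add_one (m u v * r)
    rw [abs_le]
    constructor
    · have : (⌊m u v * r⌋ : ℝ) / r ≤ m u v := by rw [div_le_iff₀ hr0]; exact h1
      have : 0 < 1 / (r:ℝ) := by positivity
      linarith
    · have : m u v ≤ ((⌊m u v * r⌋ : ℝ) + 1) / r := by rw [le_div_iff₀ hr0]; exact h2.le
      rw [add_div] at this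
      linarith
  have hη1 : 0 < 1 - 2 * (η : ℝ) := by linarith
  have hI : ∀ u v, (1 - 2 * (η:ℝ)) * (q u v : ℝ) + η ∈ Ioo (0:ℝ) 1 := by
    intro u v
    have h := hqI u v
    constructor
    · have := mul_nonneg hη1.le h.1
      linarith
    · have := mul_le_mul_of_nonneg_left h.2 hη1.le
      linarith
  refine ⟨n, fun u v => (1 - 2 * η) * q u v + η, ?_, ?_, ?_⟩
  · intro u v; simp only [hq, hms u v]
  · intro u v; push_cast; exact hI u v
  refine ⟨cellM n, sum_cellM (by omega), ?_⟩
  push_cast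
  refine (sum_cell_aux (by omega) hW m
    (fun u v w => crossEnt w ((1 - 2 * (η:ℝ)) * (q u v : ℝ) + η)) (B := binEnt)
    binEnt_continuous.measurable (b := 1) (fun w hw => by
      rw [abs_of_nonneg (binEnt_mem hw).1]; exact (binEnt_mem hw).2)
    (a := ε / 3 + C / r) (C := C) (fun u v w hw => crossEnt_nonneg hw (hI u v)) ?_).trans ?_
  · intro u v w hw
    refine (crossEnt_le hw (hqI u v) hη0 hη2).trans ?_
    have h1 : |w - (q u v : ℝ)| ≤ |w - m u v| + 1 / r :=
      (abs_sub_le _ (m u v) _).trans (add_le_add le_rfl (hqd u v))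
    have h2 := mul_le_mul_of_nonneg_left h1 hC0.le
    have h3 : C * (|w - m u v| + 1 / r) = C * |w - m u v| + C / r := by ring
    linarith
  · rw [← graphonEnt_eq hW]
    have h1 := mul_le_mul_of_nonneg_left hme hC0.le
    have h2 : C * (ε / 3 / C) = ε / 3 := by field_simp
    linarith

lemma marginal {n k : ℕ} (q : Fin n → Fin k → ℝ) (hq1 : ∀ u, ∑ i, q u i = 1)
    {u v : Fin n} (huv : u ≠ v) (i j : Fin k) :
    ∑ π : Fin n → Fin k, (∏ w, q w (π w)) * ((if π u = i then 1 else 0) *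
      (if π v = j then 1 else 0)) = q u i * q v j := by
  have h1 : ∀ π : Fin n → Fin k, (∏ w, q w (π w)) * ((if π u = i then (1:ℝ) else 0) *
      (if π v = j then 1 else 0)) =
      ∏ w, (q w (π w) * ((if w = u then (if π w = i then 1 else 0) else 1) *
        (if w = v then (if π w = j then 1 else 0) else 1))) := by
    intro π
    rw [Finset.prod_mul_distrib, Finset.prod_mul_distrib]
    simp only [Finset.prod_ite_eq', Finset.mem_univ, if_true]
  simp only [h1]
  have h2 := Finset.prod_univ_sum (fun _ : Fin n => (Finset.univ : Finset (Fin k)))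
    (fun w a => q w a * ((if w = u then (if a = i then (1:ℝ) else 0) else 1) *
        (if w = v then (if a = j then 1 else 0) else 1)))
  rw [Fintype.piFinset_univ] at h2
  rw [← h2]
  have h3 : ∀ w, ∑ a, q w a * ((if w = u then (if a = i then (1:ℝ) else 0) else 1) *
        (if w = v then (if a = j then 1 else 0) else 1)) =
      (if w = u then q u i else 1) * (if w = v then q v j else 1) := by
    intro w
    by_cases hu : w = u
    · subst hu
      simp [huv]
    · by_cases hv : w = v
      · subst hv
        simp [hu]
      · simp [hu, hv, hq1]
  simp only [h3]
  rw [Finset.prod_mul_distrib]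
  simp

lemma marginal' {n k : ℕ} (q : Fin n → Fin k → ℝ) (hq1 : ∀ u, ∑ i, q u i = 1)
    {u v : Fin n} (huv : u ≠ v) (f : Fin k → Fin k → ℝ) :
    ∑ π : Fin n → Fin k, (∏ w, q w (π w)) * f (π u) (π v) =
      ∑ i, ∑ j, q u i * q v j * f i j := by
  have h1 : ∀ π : Fin n → Fin k, (∏ w, q w (π w)) * f (π u) (π v) =
      ∑ i, ∑ j, ((∏ w, q w (π w)) * ((if π u = i then 1 else 0) *
      (if π v = j then 1 else 0))) * f i j := by
    intro π
    simp [Finset.sum_ite_eq]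
  simp only [h1]
  rw [Finset.sum_comm]
  refine Finset.sum_congr rfl fun i _ => ?_
  rw [Finset.sum_comm]
  refine Finset.sum_congr rfl fun j _ => ?_
  rw [← Finset.sum_mul, marginal q hq1 huv]

lemma rounding {n k : ℕ} (q : Fin n → Fin k → ℝ) (hq0 : ∀ u i, 0 ≤ q u i)
    (hq1 : ∀ u, ∑ i, q u i = 1) (C : Fin n → Fin n → Fin k → Fin k → ℝ) (K : ℝ)
    (h : ∑ u, ∑ v, (if u = v then 0 else ∑ i, ∑ j, q u i * q v j * C u v i j) ≤ K) :
    ∃ π : Fin n → Fin k, ∑ u, ∑ v, (if u = v then 0 else C u v (π u) (π v)) ≤ K := by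
  by_contra hcon
  push Not at hcon
  have hw : ∑ π : Fin n → Fin k, ∏ w, q w (π w) = 1 := by
    have h2 := Finset.prod_univ_sum (fun _ : Fin n => (Finset.univ : Finset (Fin k)))
      (fun w a => q w a)
    rw [Fintype.piFinset_univ] at h2
    rw [← h2]
    simp [hq1]
  have hmain : ∑ π : Fin n → Fin k, (∏ w, q w (π w)) *
      (∑ u, ∑ v, (if u = v then 0 else C u v (π u) (π v))) ≤ K := by
    refine le_trans (le_of_eq ?_) h
    simp only [Finset.mul_sum]
    rw [Finset.sum_comm]
    refine Finset.sum_congr rfl fun u _ => ?_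
    rw [Finset.sum_comm]
    refine Finset.sum_congr rfl fun v _ => ?_
    by_cases huv : u = v
    · simp [huv]
    · simp only [huv, if_false]
      exact marginal' q hq1 huv _
  have hw0 : ∀ π : Fin n → Fin k, 0 ≤ ∏ w, q w (π w) := fun π =>
    Finset.prod_nonneg fun w _ => hq0 _ _
  obtain ⟨π0, -, hπ0⟩ : ∃ π ∈ (Finset.univ : Finset (Fin n → Fin k)), 0 < ∏ w, q w (π w) := by
    by_contra hc
    push Not at hc
    have := Finset.sum_nonpos hc
    linarith
  have : ∑ π : Fin n → Fin k, (∏ w, q w (π w)) * K <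
      ∑ π : Fin n → Fin k, (∏ w, q w (π w)) *
      (∑ u, ∑ v, (if u = v then 0 else C u v (π u) (π v))) := by
    refine Finset.sum_lt_sum (fun π _ => mul_le_mul_of_nonneg_left (hcon π).le (hw0 π))
      ⟨π0, Finset.mem_univ _, mul_lt_mul_of_pos_left (hcon π0) hπ0⟩
  rw [← Finset.sum_mul, hw] at this
  linarith

/-- The pairs `u < v` of vertices. -/
abbrev Pairs (n : ℕ) := {p : Fin n × Fin n // p.1 < p.2}

lemma sum_pairs {n : ℕ} (c : Fin n → Fin n → ℝ) :
    ∑ u, ∑ v, c u v = ∑ u, c u u + ∑ e : Pairs n, (c e.1.1 e.1.2 + c e.1.2 e.1.1) := by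
  have hsub : ∀ f : Fin n × Fin n → ℝ, ∑ e : Pairs n, f e.1 =
      ∑ p : Fin n × Fin n, if p.1 < p.2 then f p else 0 := by
    intro f
    rw [← Finset.sum_filter]
    exact (Finset.sum_subtype _ (by simp) f).symm
  rw [hsub (fun p => c p.1 p.2 + c p.2 p.1)]
  have h3 : ∑ p : Fin n × Fin n, (if p.1 < p.2 then c p.1 p.2 + c p.2 p.1 else 0) =
      ∑ p : Fin n × Fin n, (if p.1 < p.2 then c p.1 p.2 else 0) +
      ∑ p : Fin n × Fin n, (if p.2 < p.1 then c p.1 p.2 else 0) := by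
    have h4 : ∑ p : Fin n × Fin n, (if p.2 < p.1 then c p.1 p.2 else 0) =
        ∑ p : Fin n × Fin n, (if p.1 < p.2 then c p.2 p.1 else 0) :=
      (Equiv.sum_comp (Equiv.prodComm (Fin n) (Fin n))
        (fun p : Fin n × Fin n => if p.2 < p.1 then c p.1 p.2 else 0)).symm
    rw [h4, ← Finset.sum_add_distrib]
    refine Finset.sum_congr rfl fun p _ => ?_
    split_ifs <;> simp
  have h5 : ∑ u, c u u = ∑ p : Fin n × Fin n, (if p.1 = p.2 then c p.1 p.2 else 0) := by
    rw [Fintype.sum_prod_type]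
    simp
  rw [h3, h5, ← Finset.sum_add_distrib, ← Finset.sum_add_distrib, ← Fintype.sum_prod_type']
  refine Finset.sum_congr rfl fun p _ => ?_
  rcases lt_trichotomy p.1 p.2 with h | h | h
  · simp [h, h.ne, h.le]
  · simp [h]
  · simp [h, h.ne', h.le]

lemma card_pairs (n : ℕ) : (Fintype.card (Pairs n) : ℝ) = choose2 n := by
  have := sum_pairs (n := n) (fun _ _ => 1)
  simp at this
  unfold choose2
  rw [eq_div_iff (by norm_num)]
  linear_combination -this

open Classical in
/-- Graphs as 0/1 vectors indexed by pairs. -/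
def graphEquiv (n : ℕ) : SimpleGraph (Fin n) ≃ (Pairs n → Bool) where
  toFun G e := decide (G.Adj e.1.1 e.1.2)
  invFun b :=
    { Adj := fun u v => (∃ h : u < v, b ⟨(u, v), h⟩ = true) ∨ (∃ h : v < u, b ⟨(v, u), h⟩ = true)
      symm := ⟨fun _ _ h => h.symm⟩
      loopless := ⟨fun u h => by
        rcases h with ⟨h, -⟩ | ⟨h, -⟩ <;> exact lt_irrefl _ h⟩ }
  left_inv G := by
    ext u v
    simp only [decide_eq_true_eq]
    constructor
    · rintro (⟨h, h1⟩ | ⟨h, h1⟩)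
      · exact h1
      · exact h1.symm
    · intro h
      rcases lt_or_gt_of_ne h.ne with h1 | h1
      · exact Or.inl ⟨h1, h⟩
      · exact Or.inr ⟨h1, h.symm⟩
  right_inv b := by
    ext ⟨⟨u, v⟩, h⟩
    have h' : u < v := h
    simp only [h', not_lt_of_gt h', exists_true_left, IsEmpty.exists_iff, or_false,
      Bool.decide_eq_true]

lemma adjR_pair {n : ℕ} (G : SimpleGraph (Fin n)) (e : Pairs n) :
    adjR G e.1.1 e.1.2 = if graphEquiv n G e = true then 1 else 0 := by
  classical
  simp [graphEquiv, adjR]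

lemma adjR_symm {n : ℕ} (G : SimpleGraph (Fin n)) (u v : Fin n) : adjR G u v = adjR G v u := by
  unfold adjR
  congr 1
  exact propext (G.adj_comm u v)

lemma adjR_mem {n : ℕ} (G : SimpleGraph (Fin n)) (u v : Fin n) : adjR G u v ∈ Icc (0:ℝ) 1 := by
  unfold adjR
  split_ifs <;> simp

/-- Product Bernoulli weight. -/
def bw {E : Type} [Fintype E] (q : E → ℝ) (b : E → Bool) : ℝ :=
  ∏ e, if b e = true then q e else 1 - q e

lemma sum_prod_bool {E : Type} [Fintype E] [DecidableEq E] (f : E → Bool → ℝ) :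
    ∑ b : E → Bool, ∏ e, f e (b e) = ∏ e, (f e true + f e false) := by
  have h2 := Finset.prod_univ_sum (fun _ : E => (Finset.univ : Finset Bool)) f
  rw [Fintype.piFinset_univ] at h2
  rw [← h2]
  simp

lemma sum_bw {E : Type} [Fintype E] [DecidableEq E] (q : E → ℝ) : ∑ b : E → Bool, bw q b = 1 := by
  unfold bw
  rw [sum_prod_bool (fun e c => if c = true then q e else 1 - q e)]
  simp

lemma bw_pos {E : Type} [Fintype E] {q : E → ℝ} (hq : ∀ e, q e ∈ Ioo (0:ℝ) 1) (b : E → Bool) :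
    0 < bw q b := by
  refine Finset.prod_pos fun e _ => ?_
  have := hq e
  split_ifs <;> linarith [this.1, this.2]

lemma logb_bw {E : Type} [Fintype E] {q : E → ℝ} (hq : ∀ e, q e ∈ Ioo (0:ℝ) 1) (b : E → Bool) :
    -Real.logb 2 (bw q b) = ∑ e, crossEnt (if b e = true then 1 else 0) (q e) := by
  unfold bw Real.logb
  rw [Real.log_prod]
  · rw [Finset.sum_div, ← Finset.sum_neg_distrib]
    refine Finset.sum_congr rfl fun e _ => ?_
    unfold crossEnt Real.logb
    split_ifs <;> simp
  · intro e _
    have := hq e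
    split_ifs <;> linarith [this.1, this.2]

lemma kraft {E : Type} [Fintype E] [DecidableEq E] {q : E → ℝ} (hq : ∀ e, q e ∈ Ioo (0:ℝ) 1)
    (K : ℝ) (s : Finset (E → Bool)) (hs : ∀ b ∈ s, -Real.logb 2 (bw q b) ≤ K) :
    (s.card : ℝ) ≤ 2 ^ K := by
  have h1 : ∀ b ∈ s, (2:ℝ) ^ (-K) ≤ bw q b := by
    intro b hb
    have := hs b hb
    rw [← Real.le_logb_iff_rpow_le (by norm_num) (bw_pos hq b)]
    linarith
  have h2 : (s.card : ℝ) * 2 ^ (-K) ≤ 1 := by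
    rw [← sum_bw q, ← nsmul_eq_mul]
    refine (Finset.card_nsmul_le_sum s _ _ h1).trans ?_
    exact Finset.sum_le_univ_sum_of_nonneg fun b => (bw_pos hq b).le
  rw [Real.rpow_neg (by norm_num)] at h2
  have h3 : (0:ℝ) < 2 ^ K := by positivity
  rwa [← div_eq_mul_inv, div_le_one h3] at h2

lemma sum_restrict_cell {n : ℕ} (hn : 0 < n) {μ : Measure ℝ} (hμ : μ ≤ lam) :
    ∑ u, μ.restrict (cell n u) = μ := by
  have h : ⋃ u, cell n u = Ioc 0 1 := by
    ext x
    simp only [mem_iUnion]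
    constructor
    · rintro ⟨u, hu⟩
      refine ⟨?_, (cell_subset u hu).2⟩
      have : (0:ℝ) ≤ ((u : ℕ) : ℝ) / n := by positivity
      exact this.trans_lt hu.1
    · exact cell_cover hn
  have h2 := Measure.restrict_iUnion (μ := μ) (s := fun u => cell n u)
    (fun u v huv => Set.disjoint_left.2 fun x h1 h2 => huv (cell_unique h1 h2)) (cell_meas n)
  rw [Measure.sum_fintype, h] at h2
  rw [← h2]
  apply Measure.restrict_eq_self_of_ae_mem
  have hl : ∀ᵐ x ∂lam, x ∈ Ioc (0:ℝ) 1 := by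
    unfold lam
    rw [← restrict_Ioc_eq_restrict_Icc]
    exact ae_restrict_mem measurableSet_Ioc
  exact (Measure.absolutelyContinuous_of_le hμ).ae_le hl

lemma split_cells {n : ℕ} (hn : 0 < n) {μ ν : Measure ℝ} (hμ : μ ≤ lam) (hν : ν ≤ lam)
    {D : ℝ → ℝ → ℝ} (hD : Measurable (Function.uncurry D)) {B : ℝ}
    (hB : ∀ x y, |D x y| ≤ B) :
    ∫ p, D p.1 p.2 ∂(μ.prod ν) = ∑ u, ∑ v,
      ∫ p, D p.1 p.2 ∂((μ.restrict (cell n u)).prod (ν.restrict (cell n v))) := by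
  have := finite_of_le_lam hμ
  have := finite_of_le_lam hν
  have h : μ.prod ν = ∑ q : Fin n × Fin n,
      (μ.restrict (cell n q.1)).prod (ν.restrict (cell n q.2)) := by
    rw [← Measure.sum_fintype, ← Measure.prod_sum (fun u => μ.restrict (cell n u))
      (fun v => ν.restrict (cell n v)), Measure.sum_fintype, Measure.sum_fintype,
      sum_restrict_cell hn hμ, sum_restrict_cell hn hν]
  rw [h, integral_finsetSum_measure (fun q _ => bdd_integrable hD hB _ _), Fintype.sum_prod_type]

lemma ae_cell' {n : ℕ} (μ ν : Measure ℝ) [IsFiniteMeasure μ] [IsFiniteMeasure ν] (u v : Fin n) :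
    ∀ᵐ p ∂((μ.restrict (cell n u)).prod (ν.restrict (cell n v))),
      p.1 ∈ cell n u ∧ p.2 ∈ cell n v := by
  rw [Measure.prod_restrict]
  exact ae_restrict_mem ((cell_meas n u).prod (cell_meas n v))

lemma integral_graph_cell {n : ℕ} (G : SimpleGraph (Fin n)) (f : ℝ → ℝ) (μ ν : Measure ℝ)
    [IsFiniteMeasure μ] [IsFiniteMeasure ν] (u v : Fin n) :
    ∫ p, f (graphonOfGraph G p.1 p.2) ∂((μ.restrict (cell n u)).prod (ν.restrict (cell n v))) =
      μ.real (cell n u) * ν.real (cell n v) * f (adjR G u v) := by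
  have h : ∀ᵐ p ∂((μ.restrict (cell n u)).prod (ν.restrict (cell n v))),
      f (graphonOfGraph G p.1 p.2) = f (adjR G u v) := by
    filter_upwards [ae_cell' μ ν u v] with p hp
    rw [graphonOfGraph_cell G hp.1 hp.2]
  rw [integral_congr_ae h, integral_const, smul_eq_mul]
  congr 1
  rw [Measure.prod_restrict, measureReal_restrict_apply_univ, measureReal_prod_prod]

lemma cert_round {n k : ℕ} (hn : 0 < n) {m : Fin k → Fin k → ℝ}
    (hms : ∀ i j, m i j = m j i) (hm : ∀ i j, m i j ∈ Ioo (0:ℝ) 1) {c : ℝ}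
    (G : SimpleGraph (Fin n)) (h : Cert k m (graphonOfGraph G) c) :
    ∃ π : Fin n → Fin k,
      -Real.logb 2 (bw (fun e : Pairs n => m (π e.1.1) (π e.1.2)) (graphEquiv n G)) ≤
        (n:ℝ) ^ 2 * c / 2 := by
  have hn' : (0:ℝ) < n := by exact_mod_cast hn
  obtain ⟨ν, hν, hc⟩ := h
  have hle := le_lam_of_sum hν
  have hfin : ∀ i, IsFiniteMeasure (ν i) := fun i => finite_of_le_lam (hle i)
  have hG := graphonOfGraph_isGraphon G
  have e1 : ∀ i j, ∫ p, crossEnt (graphonOfGraph G p.1 p.2) (m i j) ∂((ν i).prod (ν j)) =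
      ∑ u, ∑ v, (ν i).real (cell n u) * (ν j).real (cell n v) *
        crossEnt (adjR G u v) (m i j) := by
    intro i j
    rw [split_cells hn (hle i) (hle j) (cross_meas hG.2.1 _) (fun x y => cross_bdd (hG.2.2 x y) _)]
    refine Finset.sum_congr rfl fun u _ => Finset.sum_congr rfl fun v _ => ?_
    exact integral_graph_cell G (fun w => crossEnt w (m i j)) _ _ u v
  simp only [e1] at hc
  have hq1 : ∀ u, ∑ i, (n:ℝ) * (ν i).real (cell n u) = 1 := by
    intro u
    have : ∑ i, (ν i).real (cell n u) = lam.real (cell n u) := by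
      rw [← hν, Measure.real, Measure.finsetSum_apply, ENNReal.toReal_sum]
      · rfl
      · intro i _; exact measure_ne_top _ _
    rw [← Finset.mul_sum, this, lam_real_cell]
    field_simp
  have hC0 : ∀ u v i j, 0 ≤ crossEnt (adjR G u v) (m i j) := fun u v i j =>
    crossEnt_nonneg (adjR_mem G u v) (hm i j)
  obtain ⟨π, hπ⟩ := rounding (fun u i => (n:ℝ) * (ν i).real (cell n u))
    (fun u i => by positivity) hq1 (fun u v i j => crossEnt (adjR G u v) (m i j))
    ((n:ℝ) ^ 2 * c) (by
      refine le_trans ?_ (mul_le_mul_of_nonneg_left hc (by positivity))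
      have e2 : ∑ i, ∑ j, ∑ u, ∑ v, (ν i).real (cell n u) * (ν j).real (cell n v) *
          crossEnt (adjR G u v) (m i j) = ∑ u, ∑ v, ∑ i, ∑ j,
          (ν i).real (cell n u) * (ν j).real (cell n v) * crossEnt (adjR G u v) (m i j) := by
        simp only [← Fintype.sum_prod_type' (f := fun (i j : Fin k) => _),
          ← Fintype.sum_prod_type' (f := fun (i j : Fin n) => _)]
        exact Finset.sum_comm
      rw [e2, Finset.mul_sum]
      refine Finset.sum_le_sum fun u _ => ?_
      rw [Finset.mul_sum]
      refine Finset.sum_le_sum fun v _ => ?_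
      split_ifs
      · refine mul_nonneg (by positivity) (Finset.sum_nonneg fun i _ => Finset.sum_nonneg
          fun j _ => mul_nonneg (by positivity) (hC0 _ _ _ _))
      · rw [Finset.mul_sum]
        refine le_of_eq (Finset.sum_congr rfl fun i _ => ?_)
        rw [Finset.mul_sum]
        refine Finset.sum_congr rfl fun j _ => ?_
        ring)
  refine ⟨π, ?_⟩
  rw [logb_bw (fun e => hm _ _)]
  rw [sum_pairs] at hπ
  simp only [if_true, Finset.sum_const_zero, zero_add] at hπ
  rw [le_div_iff₀ (by norm_num), Finset.sum_mul]
  refine le_trans (le_of_eq (Finset.sum_congr rfl fun e _ => ?_)) hπ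
  have hne : e.1.1 ≠ e.1.2 := e.2.ne
  rw [if_neg hne, if_neg hne.symm, adjR_symm G e.1.2, hms (π e.1.2), adjR_pair]
  ring

lemma cert_count {n k : ℕ} (hn : 0 < n) {m : Fin k → Fin k → ℝ}
    (hms : ∀ i j, m i j = m j i) (hm : ∀ i j, m i j ∈ Ioo (0:ℝ) 1) (c : ℝ)  :
    (Nat.card {G : SimpleGraph (Fin n) // Cert k m (graphonOfGraph G) c} : ℝ) ≤
      (k:ℝ) ^ n * 2 ^ ((n:ℝ) ^ 2 * c / 2) := by
  classical
  rw [Nat.card_eq_fintype_card, Fintype.card_subtype]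
  set s : (Fin n → Fin k) → Finset (Pairs n → Bool) := fun π => Finset.univ.filter fun b =>
    -Real.logb 2 (bw (fun e : Pairs n => m (π e.1.1) (π e.1.2)) b) ≤ (n:ℝ) ^ 2 * c / 2 with hs
  have h1 : ((Finset.univ.filter fun G : SimpleGraph (Fin n) => Cert k m (graphonOfGraph G) c).map
      (graphEquiv n).toEmbedding) ⊆ Finset.univ.biUnion s := by
    intro b hb
    rw [Finset.mem_map] at hb
    obtain ⟨G, hG, rfl⟩ := hb
    obtain ⟨π, hπ⟩ := cert_round hn hms hm G (Finset.mem_filter.1 hG).2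
    rw [Finset.mem_biUnion]
    exact ⟨π, Finset.mem_univ _, Finset.mem_filter.2 ⟨Finset.mem_univ _, hπ⟩⟩
  have h2 := (Finset.card_le_card h1).trans Finset.card_biUnion_le
  rw [Finset.card_map] at h2
  have h3 : ∀ π ∈ (Finset.univ : Finset (Fin n → Fin k)),
      ((s π).card : ℝ) ≤ 2 ^ ((n:ℝ) ^ 2 * c / 2) := fun π _ =>
    kraft (q := fun e : Pairs n => m (π e.1.1) (π e.1.2)) (fun e => hm _ _) _ (s π)
      (fun b hb => (Finset.mem_filter.1 hb).2)
  calc _ ≤ ((∑ π, (s π).card : ℕ) : ℝ) := by exact_mod_cast h2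
    _ = ∑ π, ((s π).card : ℝ) := by push_cast; rfl
    _ ≤ _ := (Finset.sum_le_card_nsmul _ _ _ h3)
    _ = _ := by simp

/-- The real value of a Boolean. -/
def bR (c : Bool) : ℝ := if c = true then 1 else 0

lemma exp_le_quad {y : ℝ} (hy : |y| ≤ 1) : Real.exp y ≤ 1 + y + y ^ 2 := by
  have := Real.abs_exp_sub_one_sub_id_le hy
  linarith [(abs_le.1 this).2]

lemma bern_mgf {q w a : ℝ} (hq : q ∈ Ioo (0:ℝ) 1) (hw : |w| ≤ 1) (ha0 : 0 < a) (ha1 : a ≤ 1) :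
    q * Real.exp (a * (w * (1 - q))) + (1 - q) * Real.exp (a * (w * (0 - q))) ≤
      Real.exp (a ^ 2) := by
  have hq0 := hq.1
  have hq1 := hq.2
  have h1 : |a * (w * (1 - q))| ≤ 1 := by
    rw [abs_mul, abs_mul, abs_of_pos ha0, abs_of_pos (by linarith : 0 < 1 - q)]
    exact mul_le_one₀ ha1 (by have := abs_nonneg w; nlinarith) (mul_le_one₀ hw (by linarith) (by linarith))
  have h2 : |a * (w * (0 - q))| ≤ 1 := by
    rw [abs_mul, abs_mul, abs_of_pos ha0, zero_sub, abs_neg, abs_of_pos hq0]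
    exact mul_le_one₀ ha1 (by positivity) (mul_le_one₀ hw (by linarith) (by linarith))
  have e1 := mul_le_mul_of_nonneg_left (exp_le_quad h1) hq0.le
  have e2 := mul_le_mul_of_nonneg_left (exp_le_quad h2) (by linarith : 0 ≤ 1 - q)
  have e3 := Real.add_one_le_exp (a ^ 2)
  have hw2 : w ^ 2 ≤ 1 := by rw [← sq_abs]; exact pow_le_one₀ (abs_nonneg _) hw
  have hqq : q * (1 - q) ≤ 1 := by nlinarith
  have hqq0 : 0 ≤ q * (1 - q) := mul_nonneg hq0.le (by linarith)
  have h5 : w ^ 2 * (q * (1 - q)) ≤ 1 := mul_le_one₀ hw2 hqq0 hqq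
  have h6 : a ^ 2 * (w ^ 2 * (q * (1 - q))) ≤ a ^ 2 * 1 :=
    mul_le_mul_of_nonneg_left h5 (by positivity)
  nlinarith

lemma chernoff {E : Type} [Fintype E] [DecidableEq E] {q : E → ℝ} (hq : ∀ e, q e ∈ Ioo (0:ℝ) 1)
    {w : E → ℝ} (hw : ∀ e, |w e| ≤ 1) {a : ℝ} (ha0 : 0 < a) (ha1 : a ≤ 1) (t : ℝ)
    (s : Finset (E → Bool)) (hs : ∀ b ∈ s, t ≤ ∑ e, w e * (bR (b e) - q e)) :
    ∑ b ∈ s, bw q b ≤ Real.exp (a ^ 2 * Fintype.card E - a * t) := by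
  have h1 : ∀ b ∈ s, bw q b ≤
      bw q b * Real.exp (a * ∑ e, w e * (bR (b e) - q e)) * Real.exp (-(a * t)) := by
    intro b hb
    rw [mul_assoc, ← Real.exp_add]
    refine le_mul_of_one_le_right (bw_pos hq b).le (Real.one_le_exp ?_)
    have := mul_le_mul_of_nonneg_left (hs b hb) ha0.le
    linarith
  have h2 : ∑ b : E → Bool, bw q b * Real.exp (a * ∑ e, w e * (bR (b e) - q e)) ≤
      Real.exp (a ^ 2 * Fintype.card E) := by
    have e1 : ∀ b : E → Bool, bw q b * Real.exp (a * ∑ e, w e * (bR (b e) - q e)) =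
        ∏ e, ((if b e = true then q e else 1 - q e) *
          Real.exp (a * (w e * (bR (b e) - q e)))) := by
      intro b
      rw [Finset.prod_mul_distrib, Finset.mul_sum, Real.exp_sum]
      rfl
    simp only [e1]
    rw [sum_prod_bool (fun e c => (if c = true then q e else 1 - q e) *
          Real.exp (a * (w e * (bR c - q e))))]
    have e2 : Real.exp (a ^ 2 * Fintype.card E) = ∏ _e : E, Real.exp (a ^ 2) := by
      rw [Finset.prod_const, ← Real.exp_nat_mul, Finset.card_univ, mul_comm]
    rw [e2]
    refine Finset.prod_le_prod (fun e _ => ?_) (fun e _ => ?_)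
    · have := hq e
      have h3 : 0 ≤ 1 - q e := by linarith [this.2]
      have h4 := this.1.le
      simp only [if_true, Bool.false_eq_true, if_false]
      positivity
    · have := bern_mgf (hq e) (hw e) ha0 ha1
      simpa [bR] using this
  calc _ ≤ ∑ b ∈ s, bw q b * Real.exp (a * ∑ e, w e * (bR (b e) - q e)) * Real.exp (-(a * t)) :=
        Finset.sum_le_sum h1
    _ ≤ ∑ b, bw q b * Real.exp (a * ∑ e, w e * (bR (b e) - q e)) * Real.exp (-(a * t)) :=
        Finset.sum_le_univ_sum_of_nonneg fun b =>
          mul_nonneg (mul_nonneg (bw_pos hq b).le (Real.exp_pos _).le) (Real.exp_pos _).le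
    _ ≤ _ := by
        rw [← Finset.sum_mul, sub_eq_add_neg, Real.exp_add]
        exact mul_le_mul_of_nonneg_right h2 (Real.exp_pos _).le

open Classical in
lemma exists_good {E ι : Type} [Fintype E] [DecidableEq E] [Fintype ι] {q : E → ℝ}
    (hq : ∀ e, q e ∈ Ioo (0:ℝ) 1)
    {w : ι → E → ℝ} (hw : ∀ i e, |w i e| ≤ 1) {a : ℝ} (ha0 : 0 < a) (ha1 : a ≤ 1) (t : ℝ)
    (hc : (Fintype.card ι : ℝ) * Real.exp (a ^ 2 * Fintype.card E - a * t) ≤ 1 / 2)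
    {K : ℝ} (hK : ∀ b : E → Bool, (∀ i, ∑ e, w i e * (bR (b e) - q e) < t) → bw q b ≤ 2 ^ (-K)) :
    1 / 2 * (2:ℝ) ^ K ≤
      ((Finset.univ.filter fun b : E → Bool => ∀ i, ∑ e, w i e * (bR (b e) - q e) < t).card : ℝ) := by
  set s := Finset.univ.filter fun b : E → Bool => ∀ i, ∑ e, w i e * (bR (b e) - q e) < t with hs
  set bad : ι → Finset (E → Bool) := fun i =>
    Finset.univ.filter fun b : E → Bool => t ≤ ∑ e, w i e * (bR (b e) - q e) with hbad
  have h0 : ∀ b : E → Bool, 0 ≤ bw q b := fun b => (bw_pos hq b).le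
  have h1 : (1:ℝ) ≤ ∑ b ∈ s, bw q b + ∑ i, ∑ b ∈ bad i, bw q b := by
    rw [← sum_bw q]
    simp only [hs, hbad, Finset.sum_filter]
    rw [Finset.sum_comm, ← Finset.sum_add_distrib]
    refine Finset.sum_le_sum fun b _ => ?_
    have h00 : ∀ i, 0 ≤ (if t ≤ ∑ e, w i e * (bR (b e) - q e) then bw q b else 0) := fun i => by
      split_ifs
      · exact h0 b
      · exact le_rfl
    by_cases h : ∀ i, ∑ e, w i e * (bR (b e) - q e) < t
    · rw [if_pos h]
      exact le_add_of_nonneg_right (Finset.sum_nonneg fun i _ => h00 i)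
    · rw [if_neg h, zero_add]
      push Not at h
      obtain ⟨i, hi⟩ := h
      have := Finset.single_le_sum (fun i _ => h00 i) (Finset.mem_univ i)
      rwa [if_pos hi] at this
  have h2 : ∑ i, ∑ b ∈ bad i, bw q b ≤ 1 / 2 := by
    refine le_trans ?_ hc
    refine (Finset.sum_le_card_nsmul _ _ _ fun i _ =>
      chernoff hq (hw i) ha0 ha1 t (bad i) (fun b hb => (Finset.mem_filter.1 hb).2)).trans ?_
    simp
  have h3 : ∑ b ∈ s, bw q b ≤ s.card * 2 ^ (-K) := by
    rw [← nsmul_eq_mul]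
    exact Finset.sum_le_card_nsmul _ _ _ fun b hb => hK b (Finset.mem_filter.1 hb).2
  have h4 : (1:ℝ) / 2 ≤ s.card * 2 ^ (-K) := by linarith
  rw [Real.rpow_neg (by norm_num), ← div_eq_mul_inv, le_div_iff₀ (by positivity)] at h4
  exact h4

lemma frac_round {n : ℕ} (d : Fin n → Fin n → ℝ) {K : ℝ}
    (h : ∀ S T : Finset (Fin n), ∑ u ∈ S, ∑ v ∈ T, d u v ≤ K) {L : ℝ} (hL : 0 ≤ L)
    (x y : Fin n → ℝ) (hx0 : ∀ u, 0 ≤ x u) (hx1 : ∀ u, x u ≤ L)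
    (hy0 : ∀ u, 0 ≤ y u) (hy1 : ∀ u, y u ≤ L) :
    ∑ u, ∑ v, x u * y v * d u v ≤ L ^ 2 * K := by
  classical
  have gen : ∀ (z : Fin n → ℝ) (f : Fin n → ℝ), (∀ u, 0 ≤ z u) → (∀ u, z u ≤ L) →
      ∃ S : Finset (Fin n), ∑ u, z u * f u ≤ L * ∑ u ∈ S, f u := by
    intro z f hz0 hz1
    refine ⟨Finset.univ.filter fun u => 0 ≤ f u, ?_⟩
    rw [Finset.mul_sum, Finset.sum_filter]
    refine Finset.sum_le_sum fun u _ => ?_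
    split_ifs with h
    · exact mul_le_mul_of_nonneg_right (hz1 u) h
    · exact mul_nonpos_of_nonneg_of_nonpos (hz0 u) (by linarith)
  obtain ⟨S, hS⟩ := gen x (fun u => ∑ v, y v * d u v) hx0 hx1
  obtain ⟨T, hT⟩ := gen y (fun v => ∑ u ∈ S, d u v) hy0 hy1
  have e1 : ∑ u, ∑ v, x u * y v * d u v = ∑ u, x u * ∑ v, y v * d u v := by
    simp only [Finset.mul_sum, mul_assoc]
  have e2 : ∑ u ∈ S, ∑ v, y v * d u v = ∑ v, y v * ∑ u ∈ S, d u v := by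
    rw [Finset.sum_comm]
    simp only [Finset.mul_sum]
  have e3 : ∑ v ∈ T, ∑ u ∈ S, d u v ≤ K := by
    rw [Finset.sum_comm]; exact h S T
  rw [e1]
  calc _ ≤ L * (L * ∑ v ∈ T, ∑ u ∈ S, d u v) := by
        refine hS.trans (mul_le_mul_of_nonneg_left ?_ hL)
        rw [e2]; exact hT
    _ ≤ L * (L * K) := by gcongr
    _ = _ := by ring

lemma dcut_bound {n : ℕ} (hn : 0 < n) {W : ℝ → ℝ → ℝ} (hW : IsGraphon W)
    (p : Fin n → Fin n → ℝ) (hp : ∀ u v, p u v ∈ Icc (0:ℝ) 1) {ε K : ℝ}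
    (hε : ∑ u, ∑ v, ∫ z, |W z.1 z.2 - p u v| ∂((cellM n u).prod (cellM n v)) ≤ ε)
    (G : SimpleGraph (Fin n))
    (hG : ∀ S T : Finset (Fin n), |∑ u ∈ S, ∑ v ∈ T, (adjR G u v - p u v)| ≤ K) :
    dCut (graphonOfGraph G) W ≤ (1 / (n:ℝ)) ^ 2 * K + ε := by
  have hGg := graphonOfGraph_isGraphon G
  refine cutNorm_le fun S T hS hT hS1 hT1 => ?_
  set μ := lam.restrict S with hμ
  set ν := lam.restrict T with hν
  have hμl : μ ≤ lam := Measure.restrict_le_self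
  have hνl : ν ≤ lam := Measure.restrict_le_self
  rw [Measure.volume_eq_prod, ← Measure.prod_restrict, ← lam_restrict hS hS1,
    ← lam_restrict hT hT1]
  have hDm : Measurable (Function.uncurry fun x y => graphonOfGraph G x y - W x y) :=
    hGg.2.1.sub hW.2.1
  have hDb : ∀ x y, |graphonOfGraph G x y - W x y| ≤ 1 := fun x y => by
    have h1 := hGg.2.2 x y
    have h2 := hW.2.2 x y
    rw [abs_le]; constructor <;> linarith [h1.1, h1.2, h2.1, h2.2]
  rw [split_cells hn hμl hνl hDm hDb]
  have hWm : ∀ u v, Measurable (Function.uncurry fun x y => W x y - p u v) :=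
    fun u v => hW.2.1.sub_const (p u v)
  have hWb : ∀ u v x y, |W x y - p u v| ≤ 1 := fun u v x y => by
    have h1 := hp u v
    have h2 := hW.2.2 x y
    rw [abs_le]; constructor <;> linarith [h1.1, h1.2, h2.1, h2.2]
  have hGm : ∀ u v, Measurable (Function.uncurry fun x y => graphonOfGraph G x y - p u v) :=
    fun u v => hGg.2.1.sub_const (p u v)
  have hGb : ∀ u v x y, |graphonOfGraph G x y - p u v| ≤ 1 := fun u v x y => by
    have h1 := hp u v
    have h2 := hGg.2.2 x y
    rw [abs_le]; constructor <;> linarith [h1.1, h1.2, h2.1, h2.2]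
  have hcell : ∀ u v, ∫ z, (graphonOfGraph G z.1 z.2 - W z.1 z.2)
        ∂((μ.restrict (cell n u)).prod (ν.restrict (cell n v))) =
      μ.real (cell n u) * ν.real (cell n v) * (adjR G u v - p u v) -
      ∫ z, (W z.1 z.2 - p u v) ∂((μ.restrict (cell n u)).prod (ν.restrict (cell n v))) := by
    intro u v
    rw [← integral_graph_cell G (fun w => w - p u v) μ ν u v,
      ← integral_sub (bdd_integrable (hGm u v) (hGb u v) _ _)
        (bdd_integrable (hWm u v) (hWb u v) _ _)]
    congr 1
    ext z
    ring
  simp only [hcell, Finset.sum_sub_distrib]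
  refine (abs_sub _ _).trans (add_le_add ?_ ?_)
  · have hr : ∀ (ρ : Measure ℝ), ρ ≤ lam → ∀ u, ρ.real (cell n u) ≤ 1 / n := fun ρ hρ u => by
      rw [← lam_real_cell u]
      exact ENNReal.toReal_mono (measure_ne_top _ _) (hρ _)
    have h1 := frac_round (fun u v => adjR G u v - p u v) (K := K)
      (fun S T => (le_abs_self _).trans (hG S T)) (L := 1 / (n:ℝ)) (by positivity)
      (fun u => μ.real (cell n u)) (fun u => ν.real (cell n u))
      (fun u => measureReal_nonneg) (hr μ hμl) (fun u => measureReal_nonneg) (hr ν hνl)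
    have h2 := frac_round (fun u v => -(adjR G u v - p u v)) (K := K)
      (fun S T => by
        simp only [Finset.sum_neg_distrib]
        exact (neg_le_abs _).trans (hG S T)) (L := 1 / (n:ℝ)) (by positivity)
      (fun u => μ.real (cell n u)) (fun u => ν.real (cell n u))
      (fun u => measureReal_nonneg) (hr μ hμl) (fun u => measureReal_nonneg) (hr ν hνl)
    simp only [mul_neg, Finset.sum_neg_distrib] at h2
    rw [abs_le]
    constructor <;> linarith
  · refine le_trans ?_ hε
    refine (Finset.abs_sum_le_sum_abs _ _).trans (Finset.sum_le_sum fun u _ => ?_)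
    refine (Finset.abs_sum_le_sum_abs _ _).trans (Finset.sum_le_sum fun v _ => ?_)
    refine abs_integral_le_integral_abs.trans ?_
    refine integral_mono_measure ?_ (Eventually.of_forall fun z => abs_nonneg _)
      (bdd_integrable (D := fun x y => |W x y - p u v|) (hWm u v).abs
        (fun x y => by rw [abs_abs]; exact hWb u v x y) _ _)
    refine Measure.prod_mono ?_ ?_
    · exact Measure.restrict_mono le_rfl hμl
    · exact Measure.restrict_mono le_rfl hνl

lemma ent_bound {n : ℕ} (hn : 0 < n) {W : ℝ → ℝ → ℝ} (hW : IsGraphon W)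
    (p : Fin n → Fin n → ℝ) (hp : ∀ u v, p u v ∈ Icc (0:ℝ) 1) (hps : ∀ u v, p u v = p v u)
    {ε ε' C : ℝ} (hC : 0 ≤ C)
    (hε : ∑ u, ∑ v, ∫ z, |W z.1 z.2 - p u v| ∂((cellM n u).prod (cellM n v)) ≤ ε)
    (hmod : ∀ a ∈ Icc (0:ℝ) 1, ∀ b ∈ Icc (0:ℝ) 1, binEnt a ≤ binEnt b + ε' + C * |a - b|) :
    (n:ℝ) ^ 2 * (graphonEnt W - ε' - C * ε) - n ≤
      2 * ∑ e : Pairs n, binEnt (p e.1.1 e.1.2) := by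
  have hn' : (0:ℝ) < n := by exact_mod_cast hn
  have hm : Measurable (Function.uncurry fun x y => binEnt (W x y)) :=
    binEnt_continuous.measurable.comp hW.2.1
  have hb : ∀ x y, |binEnt (W x y)| ≤ 1 := fun x y => by
    have := binEnt_mem (hW.2.2 x y)
    rw [abs_of_nonneg this.1]; exact this.2
  have h1 : graphonEnt W ≤ ∑ u, ∑ v, ((1 / (n:ℝ)) ^ 2 * (binEnt (p u v) + ε') +
      C * ∫ z, |W z.1 z.2 - p u v| ∂((cellM n u).prod (cellM n v))) := by
    rw [graphonEnt_eq hW, integral_split (sum_cellM hn) hm hb]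
    refine Finset.sum_le_sum fun u _ => Finset.sum_le_sum fun v _ => ?_
    have hWm : Measurable (Function.uncurry fun x y => |W x y - p u v|) :=
      (hW.2.1.sub_const (p u v)).abs
    have i2 := bdd_integrable hWm (B := 1) (fun x y => by
      have h1 := hp u v
      have h2 := hW.2.2 x y
      rw [abs_abs, abs_le]; constructor <;> linarith [h1.1, h1.2, h2.1, h2.2])
      (cellM n u) (cellM n v)
    have e : (1 / (n:ℝ)) ^ 2 * (binEnt (p u v) + ε') =
        ∫ _z : ℝ × ℝ, (binEnt (p u v) + ε') ∂((cellM n u).prod (cellM n v)) := by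
      rw [integral_const, smul_eq_mul]
      congr 1
      unfold cellM
      rw [Measure.prod_restrict, measureReal_restrict_apply_univ, measureReal_prod_prod,
        lam_real_cell, lam_real_cell]
      ring
    rw [e, ← integral_const_mul, ← integral_add (integrable_const _) (i2.const_mul C)]
    refine integral_mono (bdd_integrable hm hb _ _) ((integrable_const _).add (i2.const_mul C)) ?_
    intro z
    exact hmod _ (hW.2.2 _ _) _ (hp u v)
  simp only [Finset.sum_add_distrib, ← Finset.mul_sum] at h1
  simp only [Finset.sum_const, Finset.card_univ, Fintype.card_fin, nsmul_eq_mul] at h1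
  have h2 := sum_pairs (fun u v => binEnt (p u v))
  have h3 : ∑ u, binEnt (p u u) ≤ n := by
    refine (Finset.sum_le_sum fun u _ => (binEnt_mem (hp u u)).2).trans ?_
    simp
  have h4 : ∑ e : Pairs n, (binEnt (p e.1.1 e.1.2) + binEnt (p e.1.2 e.1.1)) =
      2 * ∑ e : Pairs n, binEnt (p e.1.1 e.1.2) := by
    rw [Finset.mul_sum]
    refine Finset.sum_congr rfl fun e _ => ?_
    rw [hps e.1.2]; ring
  have h5 := mul_le_mul_of_nonneg_left hε hC
  have h6 : (n:ℝ) ^ 2 * ((1 / (n:ℝ)) ^ 2 * (∑ u, ∑ v, binEnt (p u v) + n * (n * ε'))) =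
      ∑ u, ∑ v, binEnt (p u v) + (n:ℝ) ^ 2 * ε' := by
    field_simp
  have h7 := mul_le_mul_of_nonneg_left (h1.trans (add_le_add le_rfl h5))
    (by positivity : (0:ℝ) ≤ (n:ℝ) ^ 2)
  rw [mul_add, h6] at h7
  nlinarith

lemma cut_weights {n : ℕ} (p : Fin n → Fin n → ℝ) (hp : ∀ u v, p u v ∈ Icc (0:ℝ) 1)
    (hps : ∀ u v, p u v = p v u) (G : SimpleGraph (Fin n)) (S T : Finset (Fin n)) :
    ∃ r : ℝ, |r| ≤ n ∧ ∑ u ∈ S, ∑ v ∈ T, (adjR G u v - p u v) =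
      r + 2 * ∑ e : Pairs n, (((if e.1.1 ∈ S then (1:ℝ) else 0) * (if e.1.2 ∈ T then 1 else 0) +
        (if e.1.2 ∈ S then 1 else 0) * (if e.1.1 ∈ T then 1 else 0)) / 2) *
        (bR (graphEquiv n G e) - p e.1.1 e.1.2) := by
  have h := sum_pairs (fun u v => (if u ∈ S then (1:ℝ) else 0) * (if v ∈ T then 1 else 0) *
    (adjR G u v - p u v))
  refine ⟨∑ u, (if u ∈ S then (1:ℝ) else 0) * (if u ∈ T then 1 else 0) *
    (adjR G u u - p u u), ?_, ?_⟩
  · refine (Finset.abs_sum_le_sum_abs _ _).trans ?_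
    refine (Finset.sum_le_sum (g := fun _ => (1:ℝ)) fun u _ => ?_).trans (by simp)
    have h1 := hp u u
    have h2 := adjR_mem G u u
    have h3 : |adjR G u u - p u u| ≤ 1 := by
      rw [abs_le]; constructor <;> linarith [h1.1, h1.2, h2.1, h2.2]
    split_ifs <;> simp [h3]
  · have e1 : ∑ u ∈ S, ∑ v ∈ T, (adjR G u v - p u v) =
        ∑ u, ∑ v, (if u ∈ S then (1:ℝ) else 0) * (if v ∈ T then 1 else 0) *
          (adjR G u v - p u v) := by
      simp [Finset.sum_ite_mem, ← Finset.mul_sum, mul_assoc]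
    rw [e1, h]
    congr 1
    rw [Finset.mul_sum]
    refine Finset.sum_congr rfl fun e _ => ?_
    rw [adjR_symm G e.1.2, hps e.1.2, adjR_pair]
    unfold bR
    ring

/-- The weights of the linear statistics that must be concentrated. -/
def statW {n : ℕ} (M : ℝ) (q : Pairs n → ℝ) :
    Option (Bool × Finset (Fin n) × Finset (Fin n)) → Pairs n → ℝ
  | none, e => -(Real.logb 2 (1 - q e) - Real.logb 2 (q e)) / M
  | some (c, S, T), e => (if c = true then 1 else -1) *
      (((if e.1.1 ∈ S then (1:ℝ) else 0) * (if e.1.2 ∈ T then 1 else 0) +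
        (if e.1.2 ∈ S then 1 else 0) * (if e.1.1 ∈ T then 1 else 0)) / 2)

lemma logb_bd {η x : ℝ} (hη : 0 < η) (h1 : η ≤ x) (h2 : x ≤ 1) :
    Real.logb 2 η ≤ Real.logb 2 x ∧ Real.logb 2 x ≤ 0 := by
  constructor
  · exact Real.logb_le_logb_of_le (by norm_num) hη h1
  · exact Real.logb_nonpos (by norm_num) (by linarith) h2

lemma good_count {n : ℕ} (hn : 0 < n) {W : ℝ → ℝ → ℝ} (hW : IsGraphon W)
    (p : Fin n → Fin n → ℝ) {η : ℝ} (hη0 : 0 < η) (hη1 : η < 1 / 2)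
    (hp : ∀ u v, p u v ∈ Icc η (1 - η)) (hps : ∀ u v, p u v = p v u) {ε : ℝ}
    (hε : ∑ u, ∑ v, ∫ z, |W z.1 z.2 - p u v| ∂((cellM n u).prod (cellM n v)) ≤ ε)
    {a δ : ℝ} (ha0 : 0 < a) (ha1 : a ≤ 1)
    (hc : (2 * (2 ^ n * 2 ^ n) + 1) *
      Real.exp (a ^ 2 * choose2 n - a * (a * (n:ℝ) ^ 2)) ≤ 1 / 2)
    (hδ : (1 / (n:ℝ)) ^ 2 * (n + 2 * (a * (n:ℝ) ^ 2)) + ε ≤ δ) :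
    1 / 2 * (2:ℝ) ^ (∑ e : Pairs n, binEnt (p e.1.1 e.1.2) - -Real.logb 2 η * (a * (n:ℝ) ^ 2)) ≤
      (NhatCut n δ W : ℝ) := by
  classical
  have hpI : ∀ u v, p u v ∈ Icc (0:ℝ) 1 := fun u v =>
    ⟨hη0.le.trans (hp u v).1, (hp u v).2.trans (by linarith)⟩
  set q : Pairs n → ℝ := fun e => p e.1.1 e.1.2 with hqdef
  have hq : ∀ e, q e ∈ Ioo (0:ℝ) 1 := fun e =>
    ⟨hη0.trans_le (hp _ _).1, (hp _ _).2.trans_lt (by linarith)⟩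
  set M : ℝ := -Real.logb 2 η with hM
  have hM0 : 0 < M := by
    have := Real.logb_neg (b := 2) (by norm_num) hη0 (by linarith)
    linarith
  have hw : ∀ i e, |statW M q i e| ≤ 1 := by
    intro i e
    rcases i with _ | ⟨c, S, T⟩
    · simp only [statW]
      rw [abs_div, abs_of_pos hM0, div_le_one hM0, abs_neg]
      have h1 := logb_bd hη0 (hp e.1.1 e.1.2).1 (hpI _ _).2
      have h2 := logb_bd (x := 1 - p e.1.1 e.1.2) hη0 (by linarith [(hp e.1.1 e.1.2).2])
        (by linarith [(hpI e.1.1 e.1.2).1])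
      rw [abs_le]
      constructor <;> linarith [h1.1, h1.2, h2.1, h2.2]
    · simp only [statW]
      have h1 : |if c = true then (1:ℝ) else -1| = 1 := by split_ifs <;> simp
      rw [abs_mul, h1, one_mul]
      split_ifs <;> norm_num
  set t : ℝ := a * (n:ℝ) ^ 2 with ht
  have hgood := exists_good hq hw ha0 ha1 t (by
    rw [card_pairs]
    refine le_trans (le_of_eq ?_) hc
    congr 1
    simp) (K := ∑ e, binEnt (q e) - M * t) (by
    intro b hb
    have h1 := hb none
    have h2 := logb_bw hq b
    have h3 : ∑ e, crossEnt (if b e = true then 1 else 0) (q e) =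
        ∑ e, binEnt (q e) - M * ∑ e, statW M q none e * (bR (b e) - q e) := by
      rw [Finset.mul_sum, ← Finset.sum_sub_distrib]
      refine Finset.sum_congr rfl fun e _ => ?_
      rw [crossEnt_eq]
      simp only [statW, binEnt]
      change _ + bR (b e) * _ = _
      field_simp
      ring
    have h4 := mul_lt_mul_of_pos_left h1 hM0
    rw [← Real.logb_le_iff_le_rpow (by norm_num) (bw_pos hq b)]
    linarith)
  refine hgood.trans ?_
  unfold NhatCut
  rw [Nat.card_eq_fintype_card, Fintype.card_subtype]
  norm_cast
  rw [← Finset.card_map (graphEquiv n).symm.toEmbedding]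
  refine Finset.card_le_card fun G hG => ?_
  rw [Finset.mem_map] at hG
  obtain ⟨b, hb, rfl⟩ := hG
  have hb' := (Finset.mem_filter.1 hb).2
  rw [Finset.mem_filter]
  refine ⟨Finset.mem_univ _, ?_⟩
  refine le_trans (dcut_bound hn hW p hpI hε _ (K := n + 2 * t) ?_) hδ
  intro S T
  obtain ⟨r, hr, hrs⟩ := cut_weights p hpI hps ((graphEquiv n).symm b) S T
  change |∑ u ∈ S, ∑ v ∈ T, (adjR ((graphEquiv n).symm b) u v - p u v)| ≤ _
  rw [hrs, Equiv.apply_symm_apply]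
  have h1 := hb' (some (true, S, T))
  have h2 := hb' (some (false, S, T))
  simp only [statW, if_true, Bool.false_eq_true, if_false, one_mul, neg_mul,
    Finset.sum_neg_distrib] at h1 h2
  have h3 := abs_le.1 hr
  rw [abs_le]
  constructor <;> linarith [h3.1, h3.2]

set_option maxHeartbeats 1000000 in
lemma lower_count {W : ℝ → ℝ → ℝ} (hW : IsGraphon W) {δ ε : ℝ} (hδ : 0 < δ) (hε : 0 < ε) :
    ∀ᶠ n : ℕ in atTop, 0 < NhatCut n δ W ∧
      (graphonEnt W - ε) * choose2 n ≤ Real.logb 2 (NhatCut n δ W : ℝ) := by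
  obtain ⟨C, hC0, hmod⟩ := binEnt_modulus (show (0:ℝ) < ε / 8 by positivity)
  set η : ℝ := min (1 / 4) (min (δ / 8) (ε / (16 * (C + 1)))) with hη
  have hη0 : 0 < η := by
    refine lt_min (by norm_num) (lt_min (by positivity) (by positivity))
  have hη1 : η ≤ 1 / 4 := min_le_left _ _
  have hη2 : η ≤ δ / 8 := (min_le_right _ _).trans (min_le_left _ _)
  have hη3 : C * (2 * η) ≤ ε / 8 := by
    have h1 : η ≤ ε / (16 * (C + 1)) := (min_le_right _ _).trans (min_le_right _ _)
    rw [le_div_iff₀ (by positivity)] at h1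
    nlinarith
  set M : ℝ := -Real.logb 2 η with hM
  have hM0 : 0 < M := by
    have := Real.logb_neg (b := 2) (by norm_num) hη0 (by linarith)
    linarith
  set a : ℝ := min 1 (min (δ / 8) (ε / (8 * M))) with ha
  have ha0 : 0 < a := lt_min (by norm_num) (lt_min (by positivity) (by positivity))
  have ha1 : a ≤ 1 := min_le_left _ _
  have ha2 : a ≤ δ / 8 := (min_le_right _ _).trans (min_le_left _ _)
  have ha3 : M * a ≤ ε / 8 := by
    have h1 : a ≤ ε / (8 * M) := (min_le_right _ _).trans (min_le_right _ _)
    rw [le_div_iff₀ (by positivity)] at h1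
    linarith
  obtain ⟨n0, hn0⟩ := approx hW hη0
  obtain ⟨N1, hN1⟩ := exists_nat_ge (10 / a ^ 2)
  obtain ⟨N2, hN2⟩ := exists_nat_ge (2 / δ)
  obtain ⟨N3, hN3⟩ := exists_nat_ge (6 / ε)
  filter_upwards [eventually_ge_atTop n0, eventually_ge_atTop N1, eventually_ge_atTop N2,
    eventually_ge_atTop N3, eventually_ge_atTop 1] with n g0 g1 g2 g3 g4
  have hn : 0 < n := g4
  have hn' : (1:ℝ) ≤ n := by exact_mod_cast g4
  have g1' : 10 / a ^ 2 ≤ (n:ℝ) := hN1.trans (by exact_mod_cast g1)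
  have g2' : 2 / δ ≤ (n:ℝ) := hN2.trans (by exact_mod_cast g2)
  have g3' : 6 / ε ≤ (n:ℝ) := hN3.trans (by exact_mod_cast g3)
  rw [div_le_iff₀ (by positivity)] at g1' g2' g3'
  obtain ⟨m, hms, hmI, hme⟩ := hn0 n g0 hn
  set p : Fin n → Fin n → ℝ := fun u v => (1 - 2 * η) * m u v + η with hp
  have hpI : ∀ u v, p u v ∈ Icc η (1 - η) := fun u v => by
    have h := hmI u v
    have h1 := mul_nonneg (by linarith : 0 ≤ 1 - 2 * η) h.1
    have h2 := mul_le_mul_of_nonneg_left h.2 (by linarith : 0 ≤ 1 - 2 * η)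
    simp only [hp]
    constructor <;> linarith
  have hps : ∀ u v, p u v = p v u := fun u v => by simp only [hp, hms u v]
  have hpI' : ∀ u v, p u v ∈ Icc (0:ℝ) 1 := fun u v =>
    ⟨hη0.le.trans (hpI u v).1, (hpI u v).2.trans (by linarith)⟩
  have hpe : ∑ u, ∑ v, ∫ z, |W z.1 z.2 - p u v| ∂((cellM n u).prod (cellM n v)) ≤ 2 * η := by
    have := sum_cell_aux hn hW m (fun u v w => |w - p u v|) (B := fun _ => 0) measurable_const
      (b := 0) (fun w _ => by simp) (a := η) (C := 1) (fun u v w _ => abs_nonneg _)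
      (fun u v w _ => by
        have h1 : |m u v - p u v| ≤ η := by
          have h := hmI u v
          simp only [hp]
          rw [abs_le]
          constructor <;> nlinarith [h.1, h.2]
        have := abs_sub_le w (m u v) (p u v)
        linarith)
    simp only [integral_zero] at this
    linarith
  have hch : choose2 n ≤ (n:ℝ) ^ 2 / 2 := by
    unfold choose2; nlinarith
  have key := good_count hn hW p hη0 (by linarith) hpI hps hpe (δ := δ) ha0 ha1 (by
    have h4 : (4:ℝ) ^ n ≤ Real.exp (2 * n) := by
      rw [mul_comm, Real.exp_nat_mul]
      have : (4:ℝ) ≤ Real.exp 2 := by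
        have h := Real.add_one_le_exp (1:ℝ)
        have h' : Real.exp 2 = Real.exp 1 * Real.exp 1 := by
          rw [← Real.exp_add]; norm_num
        rw [h']; nlinarith
      gcongr
    have h5 : (3:ℝ) ≤ Real.exp 2 := by
      have := Real.add_one_le_exp (2:ℝ); linarith
    have h6 : (2 * (2 ^ n * 2 ^ n) + 1 : ℝ) ≤ Real.exp (2 + 2 * n) := by
      rw [Real.exp_add]
      have e : (2:ℝ) ^ n * 2 ^ n = 4 ^ n := by rw [← mul_pow]; norm_num
      have h1 : (1:ℝ) ≤ 4 ^ n := one_le_pow₀ (by norm_num)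
      rw [e]
      calc (2 * 4 ^ n + 1 : ℝ) ≤ 3 * 4 ^ n := by linarith
        _ ≤ _ := by gcongr
    have h7 : a ^ 2 * choose2 n - a * (a * (n:ℝ) ^ 2) ≤ -(a ^ 2 * (n:ℝ) ^ 2 / 2) := by
      nlinarith [mul_le_mul_of_nonneg_left hch (sq_nonneg a)]
    have h8 : 2 + 2 * (n:ℝ) + -(a ^ 2 * (n:ℝ) ^ 2 / 2) ≤ -1 := by nlinarith
    calc _ ≤ Real.exp (2 + 2 * n) * Real.exp (-(a ^ 2 * (n:ℝ) ^ 2 / 2)) := by gcongr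
      _ ≤ Real.exp (-1) := by rw [← Real.exp_add]; exact Real.exp_le_exp.2 h8
      _ ≤ 1 / 2 := by
        rw [Real.exp_neg, one_div]
        have := Real.add_one_le_exp (1:ℝ)
        exact inv_anti₀ (by norm_num) (by linarith))
    (by
      have e : (1 / (n:ℝ)) ^ 2 * (n + 2 * (a * (n:ℝ) ^ 2)) = 1 / n + 2 * a := by
        field_simp
      rw [e]
      have : 1 / (n:ℝ) ≤ δ / 2 := by
        rw [div_le_iff₀ (by linarith)]; linarith
      linarith)
  have hent := ent_bound hn hW p hpI' hps hC0 hpe hmod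
  set H := ∑ e : Pairs n, binEnt (p e.1.1 e.1.2) with hH
  have hpos : (0:ℝ) < (NhatCut n δ W : ℝ) := lt_of_lt_of_le (by positivity) key
  refine ⟨by exact_mod_cast hpos, ?_⟩
  have hlog : H - M * (a * (n:ℝ) ^ 2) - 1 ≤ Real.logb 2 (NhatCut n δ W : ℝ) := by
    rw [Real.le_logb_iff_rpow_le (by norm_num) hpos, Real.rpow_sub (by norm_num), Real.rpow_one]
    linarith
  rcases le_total (graphonEnt W - ε) 0 with h | h
  · have h0 : 0 ≤ choose2 n := by unfold choose2; nlinarith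
    refine (mul_nonpos_of_nonpos_of_nonneg h h0).trans (Real.logb_nonneg (by norm_num) ?_)
    exact_mod_cast hpos
  · refine le_trans ?_ hlog
    have h1 := mul_le_mul_of_nonneg_left hch h
    have hn2 : (0:ℝ) ≤ (n:ℝ) ^ 2 := by positivity
    have h2 := mul_le_mul_of_nonneg_right ha3 hn2
    have h3 := mul_le_mul_of_nonneg_left hη3 hn2
    have h4 : 6 * (n:ℝ) ≤ ε * (n:ℝ) ^ 2 := by
      have := mul_le_mul_of_nonneg_right g3' (by linarith : (0:ℝ) ≤ n)
      linarith
    linarith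

lemma tendsto_conclude (x : ℝ → ℕ → ℝ) (s : ℝ)
    (hu : ∀ ε > 0, ∃ δ0 > 0, ∀ δ, 0 < δ → δ < δ0 → ∀ᶠ n in atTop, x δ n ≤ s + ε)
    (hl : ∀ ε > 0, ∀ δ, 0 < δ → ∀ᶠ n in atTop, s - ε ≤ x δ n) :
    Tendsto (fun δ => liminf (x δ) atTop) (nhdsWithin 0 (Ioi 0)) (nhds s) ∧
    Tendsto (fun δ => limsup (x δ) atTop) (nhdsWithin 0 (Ioi 0)) (nhds s) := by
  have key : ∀ ε > 0, ∀ᶠ δ in nhdsWithin (0:ℝ) (Ioi 0),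
      s - ε ≤ liminf (x δ) atTop ∧ liminf (x δ) atTop ≤ limsup (x δ) atTop ∧
      limsup (x δ) atTop ≤ s + ε := by
    intro ε hε
    obtain ⟨δ0, hδ0, h⟩ := hu ε hε
    filter_upwards [Ioo_mem_nhdsGT hδ0] with δ hδ
    have h1 := h δ hδ.1 hδ.2
    have h2 := hl ε hε δ hδ.1
    have b1 : IsBoundedUnder (· ≤ ·) atTop (x δ) := ⟨s + ε, by simpa using h1⟩
    have b2 : IsBoundedUnder (· ≥ ·) atTop (x δ) := ⟨s - ε, by simpa using h2⟩
    exact ⟨le_liminf_of_le b1.isCoboundedUnder_ge h2, liminf_le_limsup b1 b2,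
      limsup_le_of_le b2.isCoboundedUnder_le h1⟩
  constructor <;>
  · rw [Metric.tendsto_nhds]
    intro ε hε
    filter_upwards [key (ε / 2) (by positivity)] with δ hδ
    obtain ⟨h1, h2, h3⟩ := hδ
    rw [Real.dist_eq, abs_lt]
    constructor <;> linarith

lemma Cert.mono {k : ℕ} {m : Fin k → Fin k → ℝ} {U : ℝ → ℝ → ℝ} {c c' : ℝ} (h : Cert k m U c)
    (hc : c ≤ c') : Cert k m U c' := by
  obtain ⟨ν, h1, h2⟩ := h
  exact ⟨ν, h1, h2.trans hc⟩

/-- Rational symmetric step functions with values in `(0,1)`. -/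
def CT : Type := {c : (Σ k : ℕ, (Fin k → Fin k → ℚ)) //
  (∀ i j, c.2 i j = c.2 j i) ∧ ∀ i j, ((c.2 i j : ℚ) : ℝ) ∈ Ioo (0:ℝ) 1}

instance CT_countable : Countable CT := by unfold CT; infer_instance

instance CT_nonempty : Nonempty CT :=
  ⟨⟨⟨0, fun _ _ => 0⟩, fun i => i.elim0, fun i => i.elim0⟩⟩

/-- The matrix of a rational step function. -/
def CT.mat (c : CT) : Fin c.1.1 → Fin c.1.1 → ℝ := fun i j => ((c.1.2 i j : ℚ) : ℝ)

lemma CT.symm' (c : CT) (i j : Fin c.1.1) : c.mat i j = c.mat j i := by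
  unfold CT.mat; rw [c.2.1 i j]

lemma CT.mem (c : CT) (i j : Fin c.1.1) : c.mat i j ∈ Ioo (0:ℝ) 1 := c.2.2 i j

lemma ct_exists {W : ℝ → ℝ → ℝ} (hW : IsGraphon W) {ε : ℝ} (hε : 0 < ε) :
    ∃ c : CT, Cert c.1.1 c.mat W (graphonEnt W + ε) := by
  obtain ⟨k, m, h1, h2, h3⟩ := cert_exists hW hε
  exact ⟨⟨⟨k, m⟩, h1, h2⟩, h3⟩

lemma ct_limit {W : ℝ → ℝ → ℝ} (hW : IsGraphon W) {f : ℕ → ℝ → ℝ → ℝ} (hf : ∀ n, IsGraphon (f n))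
    (hlim : Tendsto (fun m => deltaCut (f m) W) atTop (nhds 0)) {ε : ℝ} (hε : 0 < ε) :
    ∃ c : CT, ∀ᶠ m in atTop, Cert c.1.1 c.mat (f m) (graphonEnt W + 2 * ε) := by
  obtain ⟨c, hc⟩ := ct_exists hW hε
  refine ⟨c, ?_⟩
  obtain ⟨K, hK0, hK⟩ := Cert.transfer c.mat
  have hη : 0 < ε / (K + 1) := by positivity
  filter_upwards [hlim.eventually_lt_const hη] with m hm
  refine (hK _ _ _ _ (hf m) hW hm hc).mono ?_
  have : K * (ε / (K + 1)) ≤ ε := by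
    rw [mul_div_assoc', div_le_iff₀ (by positivity)]; nlinarith
  linarith

lemma attained (A : Set (ℝ → ℝ → ℝ)) (hA : ∀ W ∈ A, IsGraphon W) (hne : A.Nonempty)
    (hcomp : CutCompact A) : ∃ Wstar ∈ A, graphonEnt Wstar = sSup (graphonEnt '' A) := by
  have hbdd : BddAbove (graphonEnt '' A) := ⟨1, by
    rintro _ ⟨W, hW, rfl⟩; exact (graphonEnt_mem (hA W hW)).2⟩
  have hex : ∀ j : ℕ, ∃ W ∈ A, sSup (graphonEnt '' A) - 1 / ((j:ℝ) + 1) < graphonEnt W := by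
    intro j
    obtain ⟨_, ⟨W, hW, rfl⟩, h⟩ := exists_lt_of_lt_csSup (hne.image graphonEnt)
      (show sSup (graphonEnt '' A) - 1 / ((j:ℝ) + 1) < sSup (graphonEnt '' A) by
        have : 0 < 1 / ((j:ℝ) + 1) := by positivity
        linarith)
    exact ⟨W, hW, h⟩
  choose f hfA hf using hex
  obtain ⟨W, hW, φ, hφ, hlim⟩ := hcomp f hfA
  refine ⟨W, hW, le_antisymm (le_csSup hbdd ⟨W, hW, rfl⟩) ?_⟩
  refine le_of_forall_pos_le_add fun ε hε => ?_
  obtain ⟨c, hc⟩ := ct_limit (hA W hW) (fun n => hA _ (hfA (φ n))) hlim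
    (show (0:ℝ) < ε / 4 by positivity)
  obtain ⟨j0, hj0⟩ := exists_nat_one_div_lt (show (0:ℝ) < ε / 2 by positivity)
  obtain ⟨m, hm1, hm2⟩ := (hc.and (eventually_ge_atTop j0)).exists
  have h1 := hm1.ent_le c.mem (hA _ (hfA _))
  have h2 := hf (φ m)
  have h3 : 1 / ((φ m : ℝ) + 1) ≤ 1 / ((j0:ℝ) + 1) := by
    have : j0 ≤ φ m := hm2.trans (hφ.id_le m)
    gcongr
  linarith

lemma finite_cover (A : Set (ℝ → ℝ → ℝ)) (hA : ∀ W ∈ A, IsGraphon W)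
    (hcomp : CutCompact A) {s : ℝ} (hs : ∀ W ∈ A, graphonEnt W ≤ s) {ε : ℝ} (hε : 0 < ε) :
    ∃ F : Finset CT, ∀ W ∈ A, ∃ c ∈ F, Cert c.1.1 c.mat W (s + ε) := by
  classical
  obtain ⟨g, hg⟩ := exists_surjective_nat CT
  by_contra hcon
  push Not at hcon
  have hex : ∀ N : ℕ, ∃ W ∈ A, ∀ i ≤ N, ¬ Cert (g i).1.1 (g i).mat W (s + ε) := by
    intro N
    obtain ⟨W, hW, h⟩ := hcon ((Finset.range (N + 1)).image g)
    refine ⟨W, hW, fun i hi => h (g i) (Finset.mem_image.2 ⟨i, Finset.mem_range.2 (by omega), rfl⟩)⟩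
  choose f hfA hf using hex
  obtain ⟨W, hW, φ, hφ, hlim⟩ := hcomp f hfA
  obtain ⟨c, hc⟩ := ct_limit (hA W hW) (fun n => hA _ (hfA (φ n))) hlim
    (show (0:ℝ) < ε / 2 by positivity)
  obtain ⟨i, rfl⟩ := hg c
  obtain ⟨m, hm1, hm2⟩ := (hc.and (eventually_ge_atTop i)).exists
  exact hf (φ m) i (hm2.trans (hφ.id_le m)) (hm1.mono (by linarith [hs W hW]))

lemma upper_incl (A : Set (ℝ → ℝ → ℝ)) (hA : ∀ W ∈ A, IsGraphon W) (hne : A.Nonempty)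
    (hcomp : CutCompact A) {s : ℝ} (hs : ∀ W ∈ A, graphonEnt W ≤ s) {ε : ℝ} (hε : 0 < ε) :
    ∃ F : Finset CT, ∃ δ0 > 0, ∀ δ, 0 < δ → δ < δ0 → ∀ (n : ℕ) (G : SimpleGraph (Fin n)),
      sInf ((fun W => deltaCut (graphonOfGraph G) W) '' A) ≤ δ →
      ∃ c ∈ F, Cert c.1.1 c.mat (graphonOfGraph G) (s + 2 * ε) := by
  obtain ⟨F, hF⟩ := finite_cover A hA hcomp hs hε
  choose K hK0 hK using fun c : CT => Cert.transfer c.mat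
  set Km := ∑ c ∈ F, K c with hKm
  have hKm0 : 0 ≤ Km := Finset.sum_nonneg fun c _ => hK0 c
  refine ⟨F, ε / (2 * (Km + 1)), by positivity, ?_⟩
  intro δ hδ hδ0 n G hG
  obtain ⟨_, ⟨W, hW, rfl⟩, hlt⟩ := exists_lt_of_csInf_lt
    (hne.image (fun W => deltaCut (graphonOfGraph G) W))
    (show sInf ((fun W => deltaCut (graphonOfGraph G) W) '' A) < 2 * δ by linarith)
  obtain ⟨c, hc, hcert⟩ := hF W hW
  refine ⟨c, hc, (hK c _ _ _ _ (graphonOfGraph_isGraphon G) (hA W hW) hlt hcert).mono ?_⟩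
  have h1 : K c ≤ Km := Finset.single_le_sum (fun c _ => hK0 c) hc
  rw [lt_div_iff₀ (by positivity)] at hδ0
  have h2 : K c * (2 * δ) ≤ Km * (2 * δ) := mul_le_mul_of_nonneg_right h1 (by linarith)
  nlinarith

lemma upper_bound (A : Set (ℝ → ℝ → ℝ)) (hA : ∀ W ∈ A, IsGraphon W) (hne : A.Nonempty)
    (hcomp : CutCompact A) {s : ℝ} (hs0 : 0 ≤ s) (hs : ∀ W ∈ A, graphonEnt W ≤ s) {ε : ℝ}
    (hε : 0 < ε) :
    ∃ δ0 > 0, ∀ δ, 0 < δ → δ < δ0 → ∀ᶠ n : ℕ in atTop,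
      Real.logb 2 (NCutSet n δ A : ℝ) / choose2 n ≤ s + ε := by
  classical
  obtain ⟨F, δ0, hδ0, hF⟩ := upper_incl A hA hne hcomp hs (show (0:ℝ) < ε / 4 by positivity)
  refine ⟨δ0, hδ0, fun δ h1 h2 => ?_⟩
  have hinc := hF δ h1 h2
  set c : ℝ := s + 2 * (ε / 4) with hc
  have hc0 : 0 < c := by positivity
  set k : ℝ := 1 + ∑ x ∈ F, (x.1.1 : ℝ) with hk
  have hk1 : 1 ≤ k := by
    have : 0 ≤ ∑ x ∈ F, (x.1.1 : ℝ) := Finset.sum_nonneg fun x _ => by positivity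
    linarith
  set L1 : ℝ := Real.logb 2 ((F.card : ℝ) + 1) with hL1
  set L2 : ℝ := Real.logb 2 k with hL2
  have hL10 : 0 ≤ L1 := Real.logb_nonneg (by norm_num) (by
    have : (0:ℝ) ≤ F.card := by positivity
    linarith)
  have hL20 : 0 ≤ L2 := Real.logb_nonneg (by norm_num) hk1
  obtain ⟨N, hN⟩ := exists_nat_ge (4 * (L1 + L2 + c / 2) / ε + 1)
  filter_upwards [eventually_ge_atTop N, eventually_ge_atTop 2] with n g1 g2
  have hn : 0 < n := by omega
  have hn2 : (2:ℝ) ≤ n := by exact_mod_cast g2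
  have hN' : 4 * (L1 + L2 + c / 2) / ε + 1 ≤ n := hN.trans (by exact_mod_cast g1)
  have hN'' : 4 * (L1 + L2 + c / 2) ≤ (n - 1) * ε := by
    rw [← div_le_iff₀ hε]; linarith
  have hch : 0 < choose2 n := by
    unfold choose2
    have : (0:ℝ) < n - 1 := by linarith
    positivity
  have hcount : (NCutSet n δ A : ℝ) ≤ ((F.card : ℝ) + 1) * k ^ n * 2 ^ ((n:ℝ) ^ 2 * c / 2) := by
    unfold NCutSet
    have h3 : (Finset.univ.filter fun G : SimpleGraph (Fin n) =>
        sInf ((fun W => deltaCut (graphonOfGraph G) W) '' A) ≤ δ) ⊆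
        F.biUnion fun x => Finset.univ.filter fun G : SimpleGraph (Fin n) =>
          Cert x.1.1 x.mat (graphonOfGraph G) c := by
      intro G hG
      obtain ⟨x, hx, hcert⟩ := hinc n G (Finset.mem_filter.1 hG).2
      exact Finset.mem_biUnion.2 ⟨x, hx, Finset.mem_filter.2 ⟨Finset.mem_univ _, hcert⟩⟩
    have h4 := (Finset.card_le_card h3).trans Finset.card_biUnion_le
    rw [Nat.card_eq_fintype_card, Fintype.card_subtype]
    have h5 : ∀ x ∈ F, ((Finset.univ.filter fun G : SimpleGraph (Fin n) =>
          Cert x.1.1 x.mat (graphonOfGraph G) c).card : ℝ) ≤ k ^ n * 2 ^ ((n:ℝ) ^ 2 * c / 2) := by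
      intro x hx
      have h6 := cert_count hn x.symm' x.mem c
      rw [Nat.card_eq_fintype_card, Fintype.card_subtype] at h6
      refine h6.trans ?_
      have : (x.1.1 : ℝ) ≤ k := by
        have := Finset.single_le_sum (f := fun x : CT => (x.1.1 : ℝ))
          (fun x _ => by positivity) hx
        linarith
      gcongr
    calc _ ≤ ((∑ x ∈ F, (Finset.univ.filter fun G : SimpleGraph (Fin n) =>
          Cert x.1.1 x.mat (graphonOfGraph G) c).card : ℕ) : ℝ) := by exact_mod_cast h4
      _ = ∑ x ∈ F, ((Finset.univ.filter fun G : SimpleGraph (Fin n) =>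
          Cert x.1.1 x.mat (graphonOfGraph G) c).card : ℝ) := by push_cast; rfl
      _ ≤ F.card * (k ^ n * 2 ^ ((n:ℝ) ^ 2 * c / 2)) := by
          rw [← nsmul_eq_mul]; exact Finset.sum_le_card_nsmul _ _ _ h5
      _ ≤ ((F.card : ℝ) + 1) * (k ^ n * 2 ^ ((n:ℝ) ^ 2 * c / 2)) := by
          gcongr; linarith
      _ = _ := by ring
  rw [div_le_iff₀ hch]
  have hlog : Real.logb 2 (NCutSet n δ A : ℝ) ≤ L1 + n * L2 + (n:ℝ) ^ 2 * c / 2 := by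
    rcases Nat.eq_zero_or_pos (NCutSet n δ A) with h | h
    · rw [h]
      simp only [Nat.cast_zero, Real.logb_zero]
      positivity
    · refine (Real.logb_le_logb_of_le (by norm_num) (by exact_mod_cast h) hcount).trans ?_
      have e0 : (F.card : ℝ) + 1 ≠ 0 := by positivity
      have e1 : k ^ n ≠ 0 := by positivity
      have e2 : (2:ℝ) ^ ((n:ℝ) ^ 2 * c / 2) ≠ 0 := by positivity
      rw [Real.logb_mul (mul_ne_zero e0 e1) e2, Real.logb_mul e0 e1, Real.logb_pow,
        Real.logb_rpow (by norm_num) (by norm_num)]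
  refine hlog.trans ?_
  have h7 : L1 ≤ n * L1 := le_mul_of_one_le_left hL10 (by linarith)
  have h8 := mul_le_mul_of_nonneg_left hN'' (by linarith : (0:ℝ) ≤ n)
  unfold choose2
  have h9 : s + ε = c + ε / 2 := by rw [hc]; ring
  rw [h9]
  linarith

lemma lower_bound (A : Set (ℝ → ℝ → ℝ)) (hA : ∀ W ∈ A, IsGraphon W) {W : ℝ → ℝ → ℝ}
    (hW : W ∈ A) {ε δ : ℝ} (hε : 0 < ε) (hδ : 0 < δ) : ∀ᶠ n : ℕ in atTop,
      graphonEnt W - ε ≤ Real.logb 2 (NCutSet n δ A : ℝ) / choose2 n := by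
  classical
  filter_upwards [lower_count (hA W hW) hδ hε, eventually_ge_atTop 2] with n hn g2
  have hn2 : (2:ℝ) ≤ n := by exact_mod_cast g2
  have hch : 0 < choose2 n := by
    unfold choose2
    have : (0:ℝ) < n - 1 := by linarith
    positivity
  rw [le_div_iff₀ hch]
  refine hn.2.trans (Real.logb_le_logb_of_le (by norm_num) (by exact_mod_cast hn.1) ?_)
  have : NhatCut n δ W ≤ NCutSet n δ A := by
    unfold NhatCut NCutSet
    rw [Nat.card_eq_fintype_card, Nat.card_eq_fintype_card]
    refine Fintype.card_subtype_mono _ _ fun G hG => ?_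
    refine le_trans (csInf_le ⟨0, ?_⟩ ⟨W, hW, rfl⟩) ((deltaCut_le_dCut _ _).trans hG)
    rintro _ ⟨U, -, rfl⟩
    exact deltaCut_nonneg _ _
  exact_mod_cast this

/-- Lemma 4.7: for a nonempty `δ_□`-compact set `A` of graphons, the
maximum entropy over `A` is attained, and
`lim_{δ→0⁺} liminf_n log₂ N_□(n,δ;A)/C(n,2) = lim_{δ→0⁺} limsup_n log₂ N_□(n,δ;A)/C(n,2)
 = max_{W ∈ A} Ent(W)`. -/
theorem stmt8 (A : Set (ℝ → ℝ → ℝ)) (hA : ∀ W ∈ A, IsGraphon W) (hne : A.Nonempty)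
    (hcomp : CutCompact A) :
    (∃ Wstar ∈ A, graphonEnt Wstar = sSup (graphonEnt '' A)) ∧
    Filter.Tendsto (fun δ : ℝ =>
        Filter.liminf (fun n : ℕ => Real.logb 2 (NCutSet n δ A : ℝ) / choose2 n)
          Filter.atTop)
      (nhdsWithin 0 (Set.Ioi 0)) (nhds (sSup (graphonEnt '' A))) ∧
    Filter.Tendsto (fun δ : ℝ =>
        Filter.limsup (fun n : ℕ => Real.logb 2 (NCutSet n δ A : ℝ) / choose2 n)
          Filter.atTop)
      (nhdsWithin 0 (Set.Ioi 0)) (nhds (sSup (graphonEnt '' A))) := by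
  obtain ⟨Ws, hWs, hEnt⟩ := attained A hA hne hcomp
  refine ⟨⟨Ws, hWs, hEnt⟩, ?_⟩
  have hbdd : BddAbove (graphonEnt '' A) := ⟨1, by
    rintro _ ⟨W, hW, rfl⟩; exact (graphonEnt_mem (hA W hW)).2⟩
  refine tendsto_conclude (fun δ n => Real.logb 2 (NCutSet n δ A : ℝ) / choose2 n) _ ?_ ?_
  · intro ε hε
    refine upper_bound A hA hne hcomp ?_ (fun W hW => le_csSup hbdd ⟨W, hW, rfl⟩) hε
    rw [← hEnt]
    exact (graphonEnt_mem (hA Ws hWs)).1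
  · intro ε hε δ hδ
    rw [← hEnt]
    exact lower_bound A hA hWs hε hδ

end
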